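/- arXiv:math/9907202 — 7 statements merged into one kernel-verified Lean document; each statement's English description precedes it below -/
import Mathlib

section
/- For each t ∈ ℝ there exists a constant C > 0 such that for all ε ∈ (0, 1/2), ∫_ℝ |q_ε(x)^{(it−1)/2}|² dx ≤ C·|log ε|. -/
/-!
Write `s = (it - 1)/2`. Since `|q ^ s| ≤ |q| ^ (Re s) · exp (-arg q · Im s)` and `|arg q| ≤ π`, the
integrand is at most `exp (π |t|) / |q_ε(x)|`. As `a_ε = 2 / (1 + ε²) ≥ 1`, the two linear
factors give `|q_ε(x)| ≥ max(|x|, ε) · max(1, ε |x|)`. By the symmetry `x ↦ -x` it is enough to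
integrate over `x > 0`: the bound `1 / ε` on `(0, ε]` contributes `1`, the bound `1 / x` on
`(ε, 1/ε]` contributes `2 |log ε|`, and the bound `1 / (ε x²)` on `(1/ε, ∞)` contributes `1`.
Since `|log ε| ≥ log 2` for `ε < 1/2`, the constants are absorbed in `|log ε|`.
-/

open MeasureTheory Real Complex ENNReal

/-- The positive constant making the quadratic form
`a·(x − iεy)(εx + iy)` on `ℂ²` have determinant `1`. -/
noncomputable def aEps (ε : ℝ) : ℝ := 1 / Real.sqrt (ε ^ 2 + (1 - ε ^ 2) ^ 2 / 4)

/-- `q_ε(x) = Q_ε(x,1) = a_ε·(x − iε)(εx + i)`, the restriction of the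
quadratic form `Q_ε` to the line `{(x,1)}`. -/
noncomputable def qEps (ε : ℝ) (x : ℝ) : ℂ :=
  (aEps ε : ℂ) * ((x : ℂ) - (ε : ℂ) * Complex.I) * ((ε : ℂ) * (x : ℂ) + Complex.I)

lemma one_le_aEps {ε : ℝ} (h0 : 0 < ε) (h1 : ε < 1) : 1 ≤ aEps ε := by
  have h : ε ^ 2 + (1 - ε ^ 2) ^ 2 / 4 = ((1 + ε ^ 2) / 2) ^ 2 := by ring
  rw [aEps, h, Real.sqrt_sq (by positivity), le_div_iff₀ (by positivity)]
  nlinarith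

lemma mul_max_le_norm_qEps {ε : ℝ} (h0 : 0 < ε) (h1 : ε < 1) (x : ℝ) :
    max |x| ε * max 1 (ε * |x|) ≤ ‖qEps ε x‖ := by
  have ha := one_le_aEps h0 h1
  have hA : max |x| ε ≤ ‖(x : ℂ) - (ε : ℂ) * Complex.I‖ := by
    refine max_le ?_ ?_
    · simpa using Complex.abs_re_le_norm ((x : ℂ) - (ε : ℂ) * Complex.I)
    · simpa [abs_of_pos h0] using Complex.abs_im_le_norm ((x : ℂ) - (ε : ℂ) * Complex.I)
  have hB : max 1 (ε * |x|) ≤ ‖(ε : ℂ) * (x : ℂ) + Complex.I‖ := by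
    refine max_le ?_ ?_
    · simpa using Complex.abs_im_le_norm ((ε : ℂ) * (x : ℂ) + Complex.I)
    · simpa [abs_mul, abs_of_pos h0] using
        Complex.abs_re_le_norm ((ε : ℂ) * (x : ℂ) + Complex.I)
  rw [qEps, norm_mul, norm_mul, Complex.norm_real, Real.norm_of_nonneg (by linarith)]
  have hA' : max |x| ε ≤ aEps ε * ‖(x : ℂ) - (ε : ℂ) * Complex.I‖ :=
    hA.trans (le_mul_of_one_le_left (norm_nonneg _) ha)
  exact mul_le_mul hA' hB (by positivity) (by positivity)

lemma norm_cpow_sq_le (t : ℝ) (z : ℂ) :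
    ‖z ^ (((t : ℂ) * Complex.I - 1) / 2)‖ ^ 2 ≤ Real.exp (π * |t|) * ‖z‖⁻¹ := by
  set s : ℂ := ((t : ℂ) * Complex.I - 1) / 2 with hs
  have hre : s.re = -(1 / 2) := by simp [hs]; norm_num
  have him : s.im = t / 2 := by simp [hs]
  have h := Complex.norm_cpow_le z s
  rw [hre, him, div_eq_mul_inv, ← Real.exp_neg] at h
  have harg : -(z.arg * (t / 2)) * 2 ≤ π * |t| := by
    have h2 : |z.arg| * |t| ≤ π * |t| :=
      mul_le_mul_of_nonneg_right (Complex.abs_arg_le_pi z) (abs_nonneg t)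
    rw [← abs_mul] at h2
    linarith [neg_abs_le (z.arg * t)]
  calc ‖z ^ s‖ ^ 2 ≤ (‖z‖ ^ (-(1 / 2) : ℝ) * Real.exp (-(z.arg * (t / 2)))) ^ 2 := by gcongr
    _ = Real.exp (-(z.arg * (t / 2)) * 2) * ‖z‖⁻¹ := by
      rw [mul_pow, ← Real.rpow_natCast (‖z‖ ^ _), ← Real.rpow_mul (norm_nonneg _),
        ← Real.rpow_natCast (Real.exp _), ← Real.exp_mul]
      norm_num [Real.rpow_neg_one, mul_comm]
    _ ≤ _ := by gcongr

/-- The majorant `1 / (max(|x|, ε) · max(1, ε |x|))` of `1 / |q_ε(x)|`. -/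
noncomputable def majorant (ε x : ℝ) : ℝ := (max |x| ε * max 1 (ε * |x|))⁻¹

lemma majorant_neg (ε x : ℝ) : majorant ε (-x) = majorant ε x := by simp [majorant]

/-- The three ranges `(0, ε]`, `(ε, 1/ε]`, `(1/ε, ∞)` contribute at most
`1`, `2 |log ε|` and `1`. -/
lemma lintegral_Ioi_majorant_le {ε : ℝ} (h0 : 0 < ε) (h1 : ε < 1) :
    ∫⁻ x in Set.Ioi (0 : ℝ), ENNReal.ofReal (majorant ε x) ≤
      ENNReal.ofReal (2 + 2 * |Real.log ε|) := by
  have hinv : ε ≤ ε⁻¹ := h1.le.trans (one_le_inv₀ h0 |>.2 h1.le)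
  have hi0 : 0 < ε⁻¹ := inv_pos.2 h0
  have near : ∫⁻ x in Set.Ioc 0 ε, ENNReal.ofReal (majorant ε x) ≤ ENNReal.ofReal 1 := by
    calc ∫⁻ x in Set.Ioc 0 ε, ENNReal.ofReal (majorant ε x)
        ≤ ∫⁻ x in Set.Ioc 0 ε, ENNReal.ofReal ε⁻¹ := by
          refine setLIntegral_mono' measurableSet_Ioc fun x _ => ENNReal.ofReal_le_ofReal ?_
          refine inv_anti₀ h0 ?_
          simpa using mul_le_mul (le_max_right |x| ε) (le_max_left 1 (ε * |x|))
            zero_le_one (by positivity)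
      _ = ENNReal.ofReal 1 := by
          rw [setLIntegral_const, Real.volume_Ioc, ← ENNReal.ofReal_mul hi0.le, sub_zero,
            inv_mul_cancel₀ h0.ne']
  have mid : ∫⁻ x in Set.Ioc ε ε⁻¹, ENNReal.ofReal (majorant ε x) ≤
      ENNReal.ofReal (2 * |Real.log ε|) := by
    have hint : IntegrableOn (fun x : ℝ => x⁻¹) (Set.Ioc ε ε⁻¹) := by
      rw [← intervalIntegrable_iff_integrableOn_Ioc_of_le hinv]
      refine intervalIntegral.intervalIntegrable_inv (fun x hx => ?_) continuousOn_id
      rw [Set.uIcc_of_le hinv] at hx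
      exact (h0.trans_le hx.1).ne'
    calc ∫⁻ x in Set.Ioc ε ε⁻¹, ENNReal.ofReal (majorant ε x)
        ≤ ∫⁻ x in Set.Ioc ε ε⁻¹, ENNReal.ofReal x⁻¹ := by
          refine setLIntegral_mono' measurableSet_Ioc fun x hx => ENNReal.ofReal_le_ofReal ?_
          have hx0 : 0 < x := h0.trans hx.1
          refine inv_anti₀ hx0 ?_
          simpa [abs_of_pos hx0] using mul_le_mul (le_max_left |x| ε) (le_max_left 1 (ε * |x|))
            zero_le_one (by positivity)
      _ = ENNReal.ofReal (∫ x in Set.Ioc ε ε⁻¹, x⁻¹) := by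
          refine (ofReal_integral_eq_lintegral_ofReal hint ?_).symm
          filter_upwards [ae_restrict_mem measurableSet_Ioc] with x hx
          exact inv_nonneg.2 (h0.trans hx.1).le
      _ = ENNReal.ofReal (2 * |Real.log ε|) := by
          rw [← intervalIntegral.integral_of_le hinv, integral_inv_of_pos h0 hi0,
            abs_of_neg (Real.log_neg h0 h1), Real.log_div hi0.ne' h0.ne', Real.log_inv]
          congr 1; ring
  have far : ∫⁻ x in Set.Ioi ε⁻¹, ENNReal.ofReal (majorant ε x) ≤ ENNReal.ofReal 1 := by
    calc ∫⁻ x in Set.Ioi ε⁻¹, ENNReal.ofReal (majorant ε x)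
        ≤ ∫⁻ x in Set.Ioi ε⁻¹, ENNReal.ofReal (ε⁻¹ * x ^ (-2 : ℝ)) := by
          refine setLIntegral_mono' measurableSet_Ioi fun x hx => ENNReal.ofReal_le_ofReal ?_
          have hx0 : 0 < x := hi0.trans hx
          have e : ε⁻¹ * x ^ (-2 : ℝ) = (x * (ε * x))⁻¹ := by
            rw [Real.rpow_neg hx0.le, Real.rpow_two, ← mul_inv]; congr 1; ring
          rw [e]
          refine inv_anti₀ (by positivity) ?_
          simpa [abs_of_pos hx0] using mul_le_mul (le_max_left |x| ε)
            (le_max_right 1 (ε * |x|)) (by positivity) (by positivity)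
      _ = ENNReal.ofReal (∫ x in Set.Ioi ε⁻¹, ε⁻¹ * x ^ (-2 : ℝ)) := by
          refine (ofReal_integral_eq_lintegral_ofReal
            ((integrableOn_Ioi_rpow_of_lt (by norm_num) hi0).const_mul _) ?_).symm
          filter_upwards [ae_restrict_mem measurableSet_Ioi] with x hx
          have hx0 : 0 < x := hi0.trans hx
          positivity
      _ = ENNReal.ofReal 1 := by
          rw [integral_const_mul, integral_Ioi_rpow_of_lt (by norm_num) hi0]
          congr 1
          norm_num [Real.rpow_neg_one]
          field_simp
  have hU : Set.Ioi (0 : ℝ) = Set.Ioc 0 ε ∪ (Set.Ioc ε ε⁻¹ ∪ Set.Ioi ε⁻¹) := by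
    rw [Set.Ioc_union_Ioi_eq_Ioi hinv, Set.Ioc_union_Ioi_eq_Ioi h0.le]
  calc ∫⁻ x in Set.Ioi (0 : ℝ), ENNReal.ofReal (majorant ε x)
      ≤ ENNReal.ofReal 1 + (ENNReal.ofReal (2 * |Real.log ε|) + ENNReal.ofReal 1) := by
        rw [hU]
        exact (lintegral_union_le _ _ _).trans
          (add_le_add near ((lintegral_union_le _ _ _).trans (add_le_add mid far)))
    _ = ENNReal.ofReal (2 + 2 * |Real.log ε|) := by
        rw [← ENNReal.ofReal_add (by positivity) (by positivity),
          ← ENNReal.ofReal_add (by positivity) (by positivity)]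
        congr 1; ring

lemma lintegral_majorant_le {ε : ℝ} (h0 : 0 < ε) (h1 : ε < 1) :
    ∫⁻ x, ENNReal.ofReal (majorant ε x) ≤ ENNReal.ofReal (4 + 4 * |Real.log ε|) := by
  have hneg : ∫⁻ x in Set.Iio (0 : ℝ), ENNReal.ofReal (majorant ε x) =
      ∫⁻ x in Set.Ioi (0 : ℝ), ENNReal.ofReal (majorant ε x) := by
    have h := (Measure.measurePreserving_neg (volume : Measure ℝ)).setLIntegral_comp_preimage_emb
      (MeasurableEquiv.neg ℝ).measurableEmbedding
      (fun x => ENNReal.ofReal (majorant ε x)) (Set.Ioi 0)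
    simpa [majorant_neg] using h
  rw [← lintegral_add_compl _ (measurableSet_Ioi (a := (0 : ℝ))), Set.compl_Ioi,
    setLIntegral_congr (Iio_ae_eq_Iic (a := (0 : ℝ))).symm, hneg]
  refine (add_le_add (lintegral_Ioi_majorant_le h0 h1) (lintegral_Ioi_majorant_le h0 h1)).trans ?_
  rw [← ENNReal.ofReal_add (by positivity) (by positivity)]
  exact ENNReal.ofReal_le_ofReal (by linarith)

/-- For each `t ∈ ℝ` there is `C > 0` such that for all `ε ∈ (0, 1/2)`,
`∫_ℝ |q_ε(x)^{(it−1)/2}|² dx ≤ C·|log ε|`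
(the squared norm of the analytically continued `K`-fixed vector in the line
model of the principal series representation with parameter `λ = it`). -/
theorem stmt3 (t : ℝ) :
    ∃ C > (0 : ℝ), ∀ ε ∈ Set.Ioo (0 : ℝ) (1 / 2),
      (∫⁻ x : ℝ, ENNReal.ofReal
          (‖qEps ε x ^ (((t : ℂ) * Complex.I - 1) / 2)‖ ^ 2))
        ≤ ENNReal.ofReal (C * |Real.log ε|) := by
  refine ⟨Real.exp (π * |t|) * 12, by positivity, fun ε ⟨h0, h2⟩ => ?_⟩
  have h1 : ε < 1 := by linarith
  have hlog : 1 / 2 ≤ |Real.log ε| := by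
    have hl : Real.log ε < Real.log (1 / 2) := Real.log_lt_log h0 h2
    rw [one_div, Real.log_inv] at hl
    linarith [neg_abs_le (Real.log ε), Real.log_two_gt_d9]
  calc _ ≤ ∫⁻ x : ℝ, ENNReal.ofReal (Real.exp (π * |t|)) * ENNReal.ofReal (majorant ε x) := by
        refine lintegral_mono fun x => ?_
        rw [← ENNReal.ofReal_mul (Real.exp_pos _).le]
        refine ENNReal.ofReal_le_ofReal ((norm_cpow_sq_le t _).trans ?_)
        refine mul_le_mul_of_nonneg_left ?_ (Real.exp_pos _).le
        exact inv_anti₀ (by positivity) (mul_max_le_norm_qEps h0 h1 x)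
    _ = ENNReal.ofReal (Real.exp (π * |t|)) * ∫⁻ x : ℝ, ENNReal.ofReal (majorant ε x) :=
        lintegral_const_mul' _ _ ENNReal.ofReal_ne_top
    _ ≤ ENNReal.ofReal (Real.exp (π * |t|)) * ENNReal.ofReal (4 + 4 * |Real.log ε|) := by
        gcongr
        exact lintegral_majorant_le h0 h1
    _ ≤ _ := by
        rw [← ENNReal.ofReal_mul (Real.exp_pos _).le, mul_assoc]
        refine ENNReal.ofReal_le_ofReal (mul_le_mul_of_nonneg_left ?_ (Real.exp_pos _).le)
        linarith
end

section
/- There exists a constant c > 0, independent of t, such that for all t ∈ ℝ and all ε ∈ (0, 0.1), ∫_ℝ |q_ε(x)^{(it−1)/2}|² dx ≥ c·exp((π/2 − 6ε)·|t|). -/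
/-!
For `w = (it - 1)/2` and `z ≠ 0` one has `‖z ^ w‖² = exp (-t · arg z) / ‖z‖`, so the integral is
large wherever `arg (q_ε(x))` is close to `±π/2`, with sign opposite to that of `t`. Since
`q_ε(x) = a_ε · (ε (x² + 1) + i (1 - ε²) x)`, the distance from the argument to `π/2` is, for
`x > 0`, at most its tangent `ε (x² + 1) / ((1 - ε²) x)`, which is at most `6 ε` on `[1, 2]`
(`pi_div_two_sub_le_arg_qEps`). There `‖q_ε(x)‖ ≤ 18` as well (`norm_qEps_le`), so integrating
over `[1, 2]` handles `t ≤ 0` with `c = 1/18`. The symmetry `q_ε(-x) = conj (q_ε(x))` moves the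
estimate to `[-2, -1]`, which handles `t ≥ 0`.
-/

open MeasureTheory Real Complex ENNReal

/-- A point of the open first quadrant whose slope from the imaginary axis is at most `s` has
argument at least `π/2 - s`, because an angle is at most its tangent. -/
lemma pi_div_two_sub_le_arg {z : ℂ} {s : ℝ} (hre : 0 < z.re) (him : 0 < z.im)
    (h : z.re ≤ s * z.im) : Real.pi / 2 - s ≤ Complex.arg z := by
  have h1 : |Complex.arg z| < Real.pi / 2 := Complex.abs_arg_lt_pi_div_two_iff.2 (Or.inl hre)
  have h2 : 0 ≤ Complex.arg z := Complex.arg_nonneg_iff.2 him.le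
  have h3 : Complex.arg z ≠ 0 := fun h0 => him.ne' (Complex.arg_eq_zero_iff.1 h0).2
  have h4 : 0 < Complex.arg z := lt_of_le_of_ne h2 h3.symm
  have h5 := Real.le_tan (x := Real.pi / 2 - Complex.arg z)
    (by linarith [(abs_lt.1 h1).2]) (by linarith)
  rw [Real.tan_pi_div_two_sub, Complex.tan_arg, inv_div] at h5
  have h6 : z.re / z.im ≤ s := (div_le_iff₀ him).2 h
  linarith

lemma aEps_pos {ε : ℝ} (hε : ε ∈ Set.Ioo (0 : ℝ) 0.1) : 0 < aEps ε := by
  have : 0 < ε := hε.1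
  unfold aEps
  positivity

lemma aEps_le {ε : ℝ} (hε : ε ∈ Set.Ioo (0 : ℝ) 0.1) : aEps ε ≤ 3 := by
  obtain ⟨h0, h1⟩ := hε
  norm_num at h1
  have h2 : ε ^ 2 ≤ 1 / 100 := by nlinarith
  have h3 : (1 / 3 : ℝ) ≤ Real.sqrt (ε ^ 2 + (1 - ε ^ 2) ^ 2 / 4) := by
    apply Real.le_sqrt_of_sq_le
    nlinarith
  unfold aEps
  rw [div_le_iff₀ (by linarith)]
  linarith

lemma qEps_re (ε x : ℝ) : (qEps ε x).re = aEps ε * (ε * (x ^ 2 + 1)) := by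
  simp [qEps]; ring

lemma qEps_im (ε x : ℝ) : (qEps ε x).im = aEps ε * ((1 - ε ^ 2) * x) := by
  simp [qEps]; ring

lemma qEps_re_pos {ε : ℝ} (hε : ε ∈ Set.Ioo (0 : ℝ) 0.1) (x : ℝ) : 0 < (qEps ε x).re := by
  have := aEps_pos hε
  have : 0 < ε := hε.1
  rw [qEps_re]
  positivity

lemma qEps_neg (ε x : ℝ) : qEps ε (-x) = (starRingEnd ℂ) (qEps ε x) := by
  apply Complex.ext
  · rw [Complex.conj_re, qEps_re, qEps_re]; ring
  · rw [Complex.conj_im, qEps_im, qEps_im]; ring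

lemma norm_qEps_le {ε x : ℝ} (hε : ε ∈ Set.Ioo (0 : ℝ) 0.1) (hx : x ∈ Set.Icc (1 : ℝ) 2) :
    ‖qEps ε x‖ ≤ 18 := by
  have ha := aEps_pos hε
  have ha3 := aEps_le hε
  obtain ⟨h0, h1⟩ := hε
  obtain ⟨hx1, hx2⟩ := hx
  norm_num at h1
  have hA : ‖(x : ℂ) - (ε : ℂ) * Complex.I‖ ≤ 3 := by
    refine (norm_sub_le _ _).trans ?_
    simp only [norm_mul, Complex.norm_real, Complex.norm_I, Real.norm_eq_abs]
    rw [abs_of_pos h0, abs_of_pos (by linarith : 0 < x)]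
    linarith
  have hB : ‖(ε : ℂ) * (x : ℂ) + Complex.I‖ ≤ 2 := by
    refine (norm_add_le _ _).trans ?_
    simp only [norm_mul, Complex.norm_real, Complex.norm_I, Real.norm_eq_abs]
    rw [abs_of_pos h0, abs_of_pos (by linarith : 0 < x)]
    nlinarith
  have hC : ‖(aEps ε : ℂ)‖ ≤ 3 := by
    rwa [Complex.norm_real, Real.norm_eq_abs, abs_of_pos ha]
  unfold qEps
  rw [norm_mul, norm_mul]
  calc _ ≤ (3 : ℝ) * 3 * 2 := by gcongr
    _ = 18 := by norm_num

lemma pi_div_two_sub_le_arg_qEps {ε x : ℝ} (hε : ε ∈ Set.Ioo (0 : ℝ) 0.1)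
    (hx : x ∈ Set.Icc (1 : ℝ) 2) :
    Real.pi / 2 - 6 * ε ≤ Complex.arg (qEps ε x) := by
  have ha := aEps_pos hε
  have hre := qEps_re_pos hε x
  obtain ⟨h0, h1⟩ := hε
  obtain ⟨hx1, hx2⟩ := hx
  norm_num at h1
  have h2 : ε ^ 2 ≤ 1 / 100 := by nlinarith
  have hx0 : 0 < x := by linarith
  have h3 : 0 < 1 - ε ^ 2 := by linarith
  apply pi_div_two_sub_le_arg hre
  · rw [qEps_im]; positivity
  · rw [qEps_re, qEps_im]
    have h4 : x ^ 2 + 1 ≤ 6 * ((1 - ε ^ 2) * x) := by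
      nlinarith [mul_le_mul_of_nonneg_right h2 hx0.le]
    have h5 := mul_le_mul_of_nonneg_left h4 (mul_pos ha h0).le
    linarith

lemma norm_cpow_sq {z : ℂ} (hz : z ≠ 0) (t : ℝ) :
    ‖z ^ (((t : ℂ) * Complex.I - 1) / 2)‖ ^ 2 = ‖z‖⁻¹ * Real.exp (-t * Complex.arg z) := by
  have hre : ((((t : ℂ) * Complex.I - 1) / 2)).re = -1 / 2 := by simp
  have him : ((((t : ℂ) * Complex.I - 1) / 2)).im = t / 2 := by simp
  rw [Complex.norm_cpow_of_ne_zero hz, hre, him, div_pow, ← Real.rpow_natCast, ← Real.rpow_mul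
    (norm_nonneg _), ← Real.exp_nat_mul, div_eq_mul_inv, ← Real.exp_neg]
  norm_num [Real.rpow_neg_one]
  left
  ring

lemma integrand_bound {z : ℂ} {t A : ℝ} (hz : z ≠ 0) (hn : ‖z‖ ≤ 18)
    (h : A ≤ -t * Complex.arg z) :
    1 / 18 * Real.exp A ≤ ‖z ^ (((t : ℂ) * Complex.I - 1) / 2)‖ ^ 2 := by
  rw [norm_cpow_sq hz, one_div]
  have : 0 < ‖z‖ := norm_pos_iff.2 hz
  gcongr

lemma ofReal_le_lintegral_of_Icc {f : ℝ → ℝ} {a C : ℝ} (h : ∀ x ∈ Set.Icc a (a + 1), C ≤ f x) :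
    ENNReal.ofReal C ≤ ∫⁻ x : ℝ, ENNReal.ofReal (f x) := by
  calc ENNReal.ofReal C = ∫⁻ _ in Set.Icc a (a + 1), ENNReal.ofReal C := by
        rw [setLIntegral_const, Real.volume_Icc]; simp
    _ ≤ ∫⁻ x in Set.Icc a (a + 1), ENNReal.ofReal (f x) :=
        setLIntegral_mono' measurableSet_Icc fun x hx => ENNReal.ofReal_le_ofReal (h x hx)
    _ ≤ _ := setLIntegral_le_lintegral _ _

/-- There is `c > 0`, independent of `t`, such that for all `t ∈ ℝ` and all
`ε ∈ (0, 0.1)`,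
`∫_ℝ |q_ε(x)^{(it−1)/2}|² dx ≥ c·exp((π/2 − 6ε)·|t|)`. -/
theorem stmt4 :
    ∃ c > (0 : ℝ), ∀ t : ℝ, ∀ ε ∈ Set.Ioo (0 : ℝ) 0.1,
      ENNReal.ofReal (c * Real.exp ((Real.pi / 2 - 6 * ε) * |t|))
        ≤ ∫⁻ x : ℝ, ENNReal.ofReal
            (‖qEps ε x ^ (((t : ℂ) * Complex.I - 1) / 2)‖ ^ 2) := by
  refine ⟨1 / 18, by norm_num, fun t ε hε => ?_⟩
  have hne : ∀ x, qEps ε x ≠ 0 := fun x h0 => by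
    have := qEps_re_pos hε x
    simp [h0] at this
  rcases le_total t 0 with ht | ht
  · refine ofReal_le_lintegral_of_Icc (a := 1) fun x hx => ?_
    have hy : x ∈ Set.Icc (1 : ℝ) 2 := by norm_num at hx; exact hx
    refine integrand_bound (hne x) (norm_qEps_le hε hy) ?_
    rw [abs_of_nonpos ht, mul_comm]
    exact mul_le_mul_of_nonneg_left (pi_div_two_sub_le_arg_qEps hε hy) (by linarith)
  · refine ofReal_le_lintegral_of_Icc (a := -2) fun x hx => ?_
    have hy : -x ∈ Set.Icc (1 : ℝ) 2 := ⟨by linarith [hx.2], by linarith [hx.1]⟩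
    have hq : qEps ε x = (starRingEnd ℂ) (qEps ε (-x)) := by rw [← qEps_neg, neg_neg]
    refine integrand_bound (hne x) ?_ ?_
    · rw [hq, Complex.norm_conj]
      exact norm_qEps_le hε hy
    · have hpi : Complex.arg (qEps ε (-x)) ≠ Real.pi := fun h0 => by
        linarith [(Complex.arg_eq_pi_iff.1 h0).1, qEps_re_pos hε (-x)]
      -- The positive real part excludes `arg = π`, where `arg_conj` does not change the sign.
      rw [hq, Complex.arg_conj, if_neg hpi, abs_of_nonneg ht, neg_mul_neg, mul_comm]
      exact mul_le_mul_of_nonneg_left (pi_div_two_sub_le_arg_qEps hε hy) ht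
end

section
/- Let k ≥ 0 be an integer, t ∈ ℝ, λ = it, let N be a seminorm on 𝔉 such that N(h_s f) = s^{1/2}·N(f) for all s > 0 and f ∈ 𝔉 (homogeneity of degree −1/2) and such that N(f) ≤ S_k(f) for every f ∈ 𝔉 supported in [−2,2], and let α ∈ 𝔉 be supported in [−1,1]. Then there exists a constant C > 0 such that N(α·q_ε^{(λ−1)/2}) ≤ C·|log ε| for all ε ∈ (0, 1/2). -/
/-!
The function `q_ε` lives at two scales: it has modulus about `|x|` for `ε ≤ |x| ≤ 1` and about `ε`
for `|x| ≤ ε`.  With a cutoff `φ` equal to `1` on `[-1,1]` and supported in `[-2,2]`, and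
`ψ(y) = φ(y) - φ(2y)`, one writes, for `2^(-n-1) < ε ≤ 2^(-n)`,
`α = α φ(2^n x) + ∑_{j<n} α ψ(2^j x)`.
After rescaling by `s = 2^(-j)`, the `j`-th term of `α q_ε^μ`, `μ = (it-1)/2`, becomes
`(a_ε s)^μ` times the function `y ↦ α(σy) ψ(y) ((y - iδ)(ηy + i))^μ` with
`(σ, δ, η) = (s, ε/s, εs)`.  The factor `|(a_ε s)^μ| ≤ s^(-1/2)` is exactly compensated by the
homogeneity of `N`, and the parameters stay in a compact set on which the rescaled functions are
jointly smooth (`contDiffAt_piece`: the base of the power never meets the negative half-line where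
the cutoff is nonzero), so that their Sobolev norms are bounded (`exists_sobolev_bound`).  The same
holds for the term with `φ`, for which `1/2 ≤ δ ≤ 1`.  Each of the `n + 1 = O(|log ε|)` terms thus
contributes `O(1)`.
-/


open MeasureTheory Real Complex

/-- Membership in `𝔉 = C_c^∞(ℝ)`: smooth compactly supported functions. -/
def IsCc (f : ℝ → ℂ) : Prop := ContDiff ℝ (⊤ : ℕ∞) f ∧ HasCompactSupport f

/-- The Sobolev norm `S_k(f)² = Σ_{j≤k} ∫ |f^{(j)}|²`. -/
noncomputable def sobolev (k : ℕ) (f : ℝ → ℂ) : ℝ :=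
  Real.sqrt (∑ j ∈ Finset.range (k + 1), ∫ x : ℝ, ‖iteratedDeriv j f x‖ ^ 2)

/-! ### Sobolev bounds for smooth families -/

/-- For a jointly smooth family of functions of one variable, the iterated derivatives in that
variable are again jointly smooth. -/
lemma exists_joint_iteratedDeriv {E : Type*} [NormedAddCommGroup E] [NormedSpace ℝ E]
    (U : Set E) (hU : IsOpen U) (F : E × ℝ → ℂ)
    (hF : ContDiffOn ℝ (⊤ : ℕ∞) F (U ×ˢ Set.univ)) (j : ℕ) :
    ∃ G : E × ℝ → ℂ, ContDiffOn ℝ (⊤ : ℕ∞) G (U ×ˢ Set.univ) ∧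
      ∀ p ∈ U, ∀ y, iteratedDeriv j (fun y => F (p, y)) y = G (p, y) := by
  have hO : IsOpen (U ×ˢ (Set.univ : Set ℝ)) := hU.prod isOpen_univ
  induction j with
  | zero => exact ⟨F, hF, fun p _ y => by simp⟩
  | succ j ih =>
    obtain ⟨G, hG, hGe⟩ := ih
    refine ⟨fun z => fderiv ℝ G z (0, 1), ?_, ?_⟩
    · exact (hG.fderiv_of_isOpen hO (by simp)).clm_apply contDiffOn_const
    · intro p hp y
      rw [iteratedDeriv_succ]
      have h1 : iteratedDeriv j (fun y => F (p, y)) = fun y => G (p, y) :=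
        funext fun y => hGe p hp y
      rw [h1]
      have hd : DifferentiableAt ℝ G (p, y) :=
        (hG.contDiffAt (hO.mem_nhds ⟨hp, Set.mem_univ _⟩)).differentiableAt (by simp)
      have hg : HasDerivAt (fun y : ℝ => (p, y)) ((0 : E), (1 : ℝ)) y :=
        (hasDerivAt_const y p).prodMk (hasDerivAt_id y)
      exact (hd.hasFDerivAt.comp_hasDerivAt y hg).deriv

/-- Sobolev norms of a jointly smooth family of functions supported in `[-2,2]` are bounded on
compact sets of parameters. -/
lemma exists_sobolev_bound {E : Type*} [NormedAddCommGroup E] [NormedSpace ℝ E]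
    (k : ℕ) (U K : Set E) (hU : IsOpen U) (hK : IsCompact K) (hKU : K ⊆ U) (F : E × ℝ → ℂ)
    (hF : ContDiffOn ℝ (⊤ : ℕ∞) F (U ×ˢ Set.univ))
    (hsupp : ∀ p ∈ K, tsupport (fun y => F (p, y)) ⊆ Set.Icc (-2 : ℝ) 2) :
    ∃ C : ℝ, ∀ p ∈ K, sobolev k (fun y => F (p, y)) ≤ C := by
  have hb : ∀ j : ℕ, ∃ C : ℝ, ∀ p ∈ K, ∀ y ∈ Set.Icc (-2 : ℝ) 2,
      ‖iteratedDeriv j (fun y => F (p, y)) y‖ ≤ C := by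
    intro j
    obtain ⟨G, hG, hGe⟩ := exists_joint_iteratedDeriv U hU F hF j
    obtain ⟨C, hC⟩ := (hK.prod (isCompact_Icc (a := (-2 : ℝ)) (b := 2))).exists_bound_of_continuousOn
      (hG.continuousOn.mono (Set.prod_mono hKU (Set.subset_univ _)))
    exact ⟨C, fun p hp y hy => by rw [hGe p (hKU hp)]; exact hC (p, y) ⟨hp, hy⟩⟩
  choose C hC using hb
  refine ⟨Real.sqrt (∑ j ∈ Finset.range (k + 1), C j ^ 2 * 4), fun p hp => ?_⟩
  refine Real.sqrt_le_sqrt (Finset.sum_le_sum fun j _ => ?_)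
  have hz : ∀ y, y ∉ Set.Icc (-2 : ℝ) 2 →
      ‖iteratedDeriv j (fun y => F (p, y)) y‖ ^ 2 = 0 := by
    intro y hy
    have h0 : (fun y => F (p, y)) =ᶠ[nhds y] (fun _ => (0 : ℂ)) :=
      notMem_tsupport_iff_eventuallyEq.mp fun h => hy (hsupp p hp h)
    rw [h0.iteratedDeriv_eq]
    simp
  rw [← setIntegral_eq_integral_of_forall_compl_eq_zero hz]
  have hle := norm_setIntegral_le_of_norm_le_const (μ := volume) (s := Set.Icc (-2 : ℝ) 2)
    (f := fun y => ‖iteratedDeriv j (fun y => F (p, y)) y‖ ^ 2) (C := C j ^ 2)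
    (by simp) (fun y hy => by
      rw [Real.norm_of_nonneg (by positivity)]
      exact pow_le_pow_left₀ (norm_nonneg _) (hC j p hp y hy) 2)
  refine (le_abs_self _).trans (hle.trans (le_of_eq ?_))
  rw [Real.volume_real_Icc]
  norm_num

/-! ### The rescaled terms -/

/-- The rescaled term `α(σy) χ(y) ((y - iδ)(ηy + i))^μ`, as a function of `((σ, δ, η), y)`. -/
noncomputable def piece (α χ : ℝ → ℂ) (μ : ℂ) (z : (ℝ × ℝ × ℝ) × ℝ) : ℂ :=
  α (z.1.1 * z.2) * χ z.2 *
    (((z.2 : ℂ) - (z.1.2.1 : ℂ) * I) * ((z.1.2.2 : ℂ) * (z.2 : ℂ) + I)) ^ μ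

/-- If `|δη| < 1`, the base `ηy² + δ + iy(1 - δη)` of the power can only meet the negative real
axis at `y = 0`; there, either `δ > 0` or the cutoff `χ` vanishes identically nearby. -/
lemma contDiffAt_piece (α χ : ℝ → ℂ) (hα : ContDiff ℝ (⊤ : ℕ∞) α) (hχ : ContDiff ℝ (⊤ : ℕ∞) χ)
    (μ : ℂ) (p : ℝ × ℝ × ℝ) (y : ℝ) (hp : |p.2.1 * p.2.2| < 1)
    (h : y ≠ 0 ∨ 0 < p.2.1 ∨ χ =ᶠ[nhds 0] 0) :
    ContDiffAt ℝ (⊤ : ℕ∞) (piece α χ μ) (p, y) := by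
  by_cases hs : y ≠ 0 ∨ 0 < p.2.1
  · have hslit : (((y : ℂ) - (p.2.1 : ℂ) * I) * ((p.2.2 : ℂ) * (y : ℂ) + I)) ∈ slitPlane := by
      have hab := abs_lt.mp hp
      rw [Complex.mem_slitPlane_iff]
      by_cases hy : y = 0
      · left
        simpa [hy] using hs
      · right
        have : (((y : ℂ) - (p.2.1 : ℂ) * I) * ((p.2.2 : ℂ) * (y : ℂ) + I)).im
            = y * (1 - p.2.1 * p.2.2) := by
          simp; ring
        rw [this]
        exact mul_ne_zero hy (by linarith)
    have hof : ContDiff ℝ (⊤ : ℕ∞) (fun x : ℝ => (x : ℂ)) := Complex.ofRealCLM.contDiff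
    have hpoly : ContDiff ℝ (⊤ : ℕ∞) (fun z : (ℝ × ℝ × ℝ) × ℝ =>
        (((z.2 : ℂ) - (z.1.2.1 : ℂ) * I) * ((z.1.2.2 : ℂ) * (z.2 : ℂ) + I))) := by
      have h1 := hof.comp (contDiff_snd (E := ℝ × ℝ × ℝ) (F := ℝ))
      have h2 : ContDiff ℝ (⊤ : ℕ∞) (fun z : (ℝ × ℝ × ℝ) × ℝ => (z.1.2.1 : ℂ)) :=
        hof.comp (by fun_prop)
      have h3 : ContDiff ℝ (⊤ : ℕ∞) (fun z : (ℝ × ℝ × ℝ) × ℝ => (z.1.2.2 : ℂ)) :=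
        hof.comp (by fun_prop)
      exact (h1.sub (h2.mul contDiff_const)).mul ((h3.mul h1).add contDiff_const)
    have hpow : ContDiffAt ℝ (⊤ : ℕ∞) (fun w : ℂ => w ^ μ)
        (((y : ℂ) - (p.2.1 : ℂ) * I) * ((p.2.2 : ℂ) * (y : ℂ) + I)) := by
      have hlog : ContDiffAt ℂ (⊤ : ℕ∞) (fun w : ℂ => Complex.exp (Complex.log w * μ))
          (((y : ℂ) - (p.2.1 : ℂ) * I) * ((p.2.2 : ℂ) * (y : ℂ) + I)) :=
        ((Complex.contDiffAt_log hslit).mul contDiffAt_const).cexp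
      refine (hlog.restrict_scalars ℝ).congr_of_eventuallyEq ?_
      filter_upwards [Complex.isOpen_slitPlane.mem_nhds hslit] with w hw
      rw [Complex.cpow_def_of_ne_zero (Complex.slitPlane_ne_zero hw)]
    refine ContDiffAt.mul (ContDiffAt.mul ?_ ?_) ?_
    · exact (hα.comp (by fun_prop)).contDiffAt
    · exact (hχ.comp contDiff_snd).contDiffAt
    · exact ContDiffAt.comp (p, y) (g := fun w : ℂ => w ^ μ) hpow hpoly.contDiffAt
  · have hχ0 : χ =ᶠ[nhds 0] 0 := by tauto
    have hy : y = 0 := by tauto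
    refine (contDiffAt_const (c := (0 : ℂ))).congr_of_eventuallyEq ?_
    have ht : Filter.Tendsto (fun z : (ℝ × ℝ × ℝ) × ℝ => z.2) (nhds (p, y)) (nhds 0) := by
      rw [← hy]; exact continuous_snd.continuousAt
    filter_upwards [ht.eventually hχ0] with z hz
    simp [piece, hz]

lemma IsCc.dilate {f : ℝ → ℂ} (hf : IsCc f) {s : ℝ} (hs : s ≠ 0) : IsCc (fun x => f (x / s)) :=
  ⟨hf.1.comp (contDiff_id.div_const s), by
    simpa [div_eq_inv_mul, Function.comp_def] using hf.2.comp_homeomorph (Homeomorph.mulLeft₀ s⁻¹ (inv_ne_zero hs))⟩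

lemma IsCc.const_mul {f : ℝ → ℂ} (hf : IsCc f) (c : ℂ) : IsCc (fun x => c * f x) :=
  ⟨contDiff_const.mul hf.1, hf.2.mul_left⟩

lemma tsupport_piece (α χ : ℝ → ℂ) (hχs : tsupport χ ⊆ Set.Icc (-2 : ℝ) 2) (μ : ℂ)
    (p : ℝ × ℝ × ℝ) : tsupport (fun y => piece α χ μ (p, y)) ⊆ Set.Icc (-2 : ℝ) 2 := by
  refine (closure_mono fun y hy => ?_).trans hχs
  rw [Function.mem_support] at hy ⊢
  intro h0
  exact hy (by simp [piece, h0])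

lemma isCc_piece (α χ : ℝ → ℂ) (hα : ContDiff ℝ (⊤ : ℕ∞) α) (hχ : ContDiff ℝ (⊤ : ℕ∞) χ)
    (hχs : tsupport χ ⊆ Set.Icc (-2 : ℝ) 2)
    (μ : ℂ) (p : ℝ × ℝ × ℝ) (hp : |p.2.1 * p.2.2| < 1) (h : 0 < p.2.1 ∨ χ =ᶠ[nhds 0] 0) :
    IsCc (fun y => piece α χ μ (p, y)) := by
  refine ⟨contDiff_iff_contDiffAt.mpr fun y => ?_, ?_⟩
  · exact ContDiffAt.comp y (contDiffAt_piece α χ hα hχ μ p y hp (Or.inr h))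
      (contDiffAt_const.prodMk contDiffAt_id)
  · exact isCompact_Icc.of_isClosed_subset (isClosed_tsupport _) (tsupport_piece α χ hχs μ p)

/-- Uniform Sobolev bound for the rescaled terms: `δ` may go down to `0` when the cutoff vanishes
near the origin, and must stay away from `0` otherwise. -/
lemma exists_piece_bound (k : ℕ) (α χ : ℝ → ℂ) (hα : ContDiff ℝ (⊤ : ℕ∞) α)
    (hχ : ContDiff ℝ (⊤ : ℕ∞) χ) (hχs : tsupport χ ⊆ Set.Icc (-2 : ℝ) 2) (μ : ℂ) (d : ℝ)
    (h : (0 < d) ∨ (0 ≤ d ∧ χ =ᶠ[nhds 0] 0)) :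
    ∃ C : ℝ, ∀ σ ∈ Set.Icc (0 : ℝ) 1, ∀ δ ∈ Set.Icc d 1, ∀ η ∈ Set.Icc (0 : ℝ) (1 / 2),
      sobolev k (fun y => piece α χ μ ((σ, δ, η), y)) ≤ C := by
  let U : Set (ℝ × ℝ × ℝ) := {p | |p.2.1 * p.2.2| < 1} ∩ {p | 0 < p.2.1 ∨ χ =ᶠ[nhds 0] 0}
  let K : Set (ℝ × ℝ × ℝ) := Set.Icc 0 1 ×ˢ (Set.Icc d 1 ×ˢ Set.Icc 0 (1 / 2))
  have hd : 0 ≤ d := by rcases h with h | h; exacts [h.le, h.1]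
  have hU : IsOpen U := by
    refine IsOpen.inter (isOpen_lt (by fun_prop) continuous_const) ?_
    have h1 : IsOpen {p : ℝ × ℝ × ℝ | 0 < p.2.1} := isOpen_lt continuous_const (by fun_prop)
    exact h1.union isOpen_const
  have hK : IsCompact K := isCompact_Icc.prod (isCompact_Icc.prod isCompact_Icc)
  have hKU : K ⊆ U := by
    rintro ⟨σ, δ, η⟩ ⟨-, hδ, hη⟩
    simp only [Set.mem_Icc] at hδ hη
    refine ⟨?_, ?_⟩
    · change |δ * η| < 1
      rw [abs_of_nonneg (mul_nonneg (hd.trans hδ.1) hη.1)]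
      nlinarith
    · change 0 < δ ∨ _
      rcases h with h | h
      · exact Or.inl (h.trans_le hδ.1)
      · exact Or.inr h.2
  obtain ⟨C, hC⟩ := exists_sobolev_bound k U K hU hK hKU (piece α χ μ)
    (fun z hz => (contDiffAt_piece α χ hα hχ μ z.1 z.2 hz.1.1
      (Or.inr hz.1.2)).contDiffWithinAt) (fun p _ => tsupport_piece α χ hχs μ p)
  exact ⟨C, fun σ hσ δ hδ η hη => hC (σ, δ, η) ⟨hσ, hδ, hη⟩⟩

/-! ### Scaling -/

/-- Rescaling of a term localized at scale `s`. -/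
lemma eq_dilate_piece (α χ : ℝ → ℂ) (μ : ℂ) (ε s : ℝ) (hε : 0 < ε) (hs : 0 < s) (x : ℝ) :
    α x * χ (x / s) * qEps ε x ^ μ =
      ((aEps ε * s : ℝ) : ℂ) ^ μ * piece α χ μ ((s, ε / s, ε * s), x / s) := by
  have ha : 0 < aEps ε := by unfold aEps; positivity
  set w : ℂ := (((x / s : ℝ) : ℂ) - ((ε / s : ℝ) : ℂ) * I) *
    (((ε * s : ℝ) : ℂ) * ((x / s : ℝ) : ℂ) + I) with hw
  have hs' : (s : ℂ) ≠ 0 := by exact_mod_cast hs.ne'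
  have hq : qEps ε x = ((aEps ε * s : ℝ) : ℂ) * w := by
    rw [hw, qEps]
    push_cast
    field_simp
  have hw0 : w ≠ 0 := by
    have hre : 0 < w.re := by
      have : w.re = (ε * s) * (x / s) ^ 2 + ε / s := by
        rw [hw]; simp; ring
      rw [this]
      positivity
    intro h
    simp [h] at hre
  have hpow : qEps ε x ^ μ = ((aEps ε * s : ℝ) : ℂ) ^ μ * w ^ μ := by
    have hc : 0 < aEps ε * s := by positivity
    rw [hq, Complex.cpow_def_of_ne_zero (mul_ne_zero (by exact_mod_cast hc.ne') hw0),
      Complex.cpow_def_of_ne_zero (by exact_mod_cast hc.ne'), Complex.cpow_def_of_ne_zero hw0,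
      Complex.log_ofReal_mul hc hw0, ← Complex.exp_add, Complex.ofReal_log hc.le]
    ring_nf
  rw [hpow, piece]
  simp only [mul_div_cancel₀ x hs.ne']
  ring

/-- The factor `(a_ε s)^μ` is compensated by the homogeneity of `N`, because `a_ε ≥ 1`. -/
lemma norm_cpow_mul_rpow_le (t ε s : ℝ) (hε : ε ∈ Set.Ioo (0 : ℝ) (1 / 2)) (hs : 0 < s) :
    ‖((aEps ε * s : ℝ) : ℂ) ^ (((t : ℂ) * I - 1) / 2)‖ * s ^ ((1 : ℝ) / 2) ≤ 1 := by
  have ha : 1 ≤ aEps ε := by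
    obtain ⟨h0, h1⟩ := hε
    have hsq : Real.sqrt (ε ^ 2 + (1 - ε ^ 2) ^ 2 / 4) = (1 + ε ^ 2) / 2 := by
      rw [show ε ^ 2 + (1 - ε ^ 2) ^ 2 / 4 = ((1 + ε ^ 2) / 2) ^ 2 by ring]
      exact Real.sqrt_sq (by positivity)
    rw [aEps, hsq, le_div_iff₀ (by positivity)]
    nlinarith
  have hc : 0 < aEps ε * s := by positivity
  have hre : (((t : ℂ) * I - 1) / 2).re = -(1 / 2 : ℝ) := by simp; norm_num
  rw [Complex.norm_cpow_eq_rpow_re_of_pos hc, hre, Real.rpow_neg hc.le,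
    inv_mul_le_iff₀ (by positivity), mul_one]
  exact Real.rpow_le_rpow hs.le (by nlinarith) (by norm_num)

/-! ### The dyadic decomposition -/

/-- Let `N` be a seminorm on `𝔉`, homogeneous of degree `−1/2`
(`N(h_s f) = s^{1/2} N(f)`), bounded by `S_k` on functions supported in
`[−2,2]`, and let `α ∈ 𝔉` be supported in `[−1,1]`.  Then there is `C > 0` with
`N(α·q_ε^{(λ−1)/2}) ≤ C·|log ε|` for all `ε ∈ (0,1/2)`, where `λ = it`. -/
theorem stmt5 (k : ℕ) (t : ℝ) (N : (ℝ → ℂ) → ℝ)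
    (hN0 : ∀ f, IsCc f → 0 ≤ N f)
    (hNadd : ∀ f g, IsCc f → IsCc g → N (f + g) ≤ N f + N g)
    (hNsmul : ∀ (a : ℂ) (f), IsCc f → N (fun x => a * f x) = ‖a‖ * N f)
    (hNhom : ∀ s : ℝ, 0 < s → ∀ f, IsCc f →
      N (fun x => f (x / s)) = s ^ ((1 : ℝ) / 2) * N f)
    (hNS : ∀ f, IsCc f → tsupport f ⊆ Set.Icc (-2 : ℝ) 2 → N f ≤ sobolev k f)
    (α : ℝ → ℂ) (hα : IsCc α) (hαsupp : tsupport α ⊆ Set.Icc (-1 : ℝ) 1) :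
    ∃ C > (0 : ℝ), ∀ ε ∈ Set.Ioo (0 : ℝ) (1 / 2),
      N (fun x => α x * qEps ε x ^ (((t : ℂ) * Complex.I - 1) / 2))
        ≤ C * |Real.log ε| := by
  set μ : ℂ := ((t : ℂ) * I - 1) / 2 with hμ
  let B : ContDiffBump (0 : ℝ) := ⟨1, 2, one_pos, one_lt_two⟩
  let φ : ℝ → ℂ := fun x => (B x : ℂ)
  let ψ : ℝ → ℂ := fun x => φ x - φ (2 * x)
  have hφ : ContDiff ℝ (⊤ : ℕ∞) φ := Complex.ofRealCLM.contDiff.comp B.contDiff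
  have hψ : ContDiff ℝ (⊤ : ℕ∞) ψ := hφ.sub (hφ.comp (contDiff_const.mul contDiff_id))
  have hφ1 : ∀ x : ℝ, |x| ≤ 1 → φ x = 1 := by
    intro x hx
    have : B x = 1 := B.one_of_mem_closedBall (by simpa [B] using hx)
    simp [φ, this]
  have hφ0 : ∀ x : ℝ, 2 ≤ |x| → φ x = 0 := by
    intro x hx
    have : B x = 0 := B.zero_of_le_dist (by simpa [B] using hx)
    simp [φ, this]
  have hsupp : ∀ χ : ℝ → ℂ, (∀ x, 2 ≤ |x| → χ x = 0) → tsupport χ ⊆ Set.Icc (-2 : ℝ) 2 := by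
    intro χ h
    refine closure_minimal (fun x hx => ?_) isClosed_Icc
    by_contra hc
    refine hx (h x ?_)
    by_contra! h2
    exact hc ⟨(abs_lt.mp h2).1.le, (abs_lt.mp h2).2.le⟩
  have hφs : tsupport φ ⊆ Set.Icc (-2 : ℝ) 2 := hsupp φ hφ0
  have hψs : tsupport ψ ⊆ Set.Icc (-2 : ℝ) 2 := by
    refine hsupp ψ fun x hx => ?_
    have h2 : 2 ≤ |2 * x| := by rw [abs_mul, abs_two]; linarith
    simp [ψ, hφ0 x hx, hφ0 _ h2]
  have hψ0 : ψ =ᶠ[nhds 0] 0 := by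
    filter_upwards [Metric.ball_mem_nhds (0 : ℝ) (by norm_num : (0 : ℝ) < 1 / 2)] with x hx
    rw [mem_ball_zero_iff, Real.norm_eq_abs] at hx
    have h2 : |2 * x| ≤ 1 := by rw [abs_mul, abs_two]; linarith
    simp [ψ, hφ1 x (by linarith), hφ1 _ h2]
  obtain ⟨C1, hC1⟩ := exists_piece_bound k α φ hα.1 hφ hφs μ (1 / 2) (Or.inl (by norm_num))
  obtain ⟨C2, hC2⟩ := exists_piece_bound k α ψ hα.1 hψ hψs μ 0 (Or.inr ⟨le_rfl, hψ0⟩)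
  have hlog2 : 0 < Real.log 2 := Real.log_pos one_lt_two
  refine ⟨(|C1| + |C2| + 1) / Real.log 2, by positivity, fun ε hε => ?_⟩
  obtain ⟨hε0, hε1⟩ := hε
  obtain ⟨n, hn1, hn2⟩ := exists_nat_pow_near_of_lt_one hε0 (by linarith : ε ≤ 1)
    (by norm_num : (0 : ℝ) < 1 / 2) (by norm_num)
  have hcc : ∀ χ : ℝ → ℂ, ContDiff ℝ (⊤ : ℕ∞) χ → tsupport χ ⊆ Set.Icc (-2 : ℝ) 2 →
      ∀ s : ℝ, 0 < s → IsCc (fun y => piece α χ μ ((s, ε / s, ε * s), y)) := by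
    intro χ hχ hχs s hs
    refine isCc_piece α χ hα.1 hχ hχs μ _ ?_ (Or.inl (div_pos hε0 hs))
    have : ε / s * (ε * s) = ε ^ 2 := by field_simp
    rw [this, abs_of_nonneg (by positivity)]
    nlinarith
  have hterm : ∀ χ : ℝ → ℂ, ContDiff ℝ (⊤ : ℕ∞) χ → tsupport χ ⊆ Set.Icc (-2 : ℝ) 2 →
      ∀ s : ℝ, 0 < s → IsCc (fun x => α x * χ (x / s) * qEps ε x ^ μ) ∧
        N (fun x => α x * χ (x / s) * qEps ε x ^ μ) ≤
          sobolev k (fun y => piece α χ μ ((s, ε / s, ε * s), y)) := by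
    intro χ hχ hχs s hs
    have hP := hcc χ hχ hχs s hs
    have hD := hP.dilate hs.ne'
    simp only [eq_dilate_piece α χ μ ε s hε0 hs]
    refine ⟨hD.const_mul _, ?_⟩
    rw [hNsmul _ _ hD, hNhom s hs _ hP, ← mul_assoc]
    exact (mul_le_of_le_one_left (hN0 _ hP) (norm_cpow_mul_rpow_le t ε s ⟨hε0, hε1⟩ hs)).trans
      (hNS _ hP (tsupport_piece α χ hχs μ _))
  have hs0 : ∀ j : ℕ, (0 : ℝ) < (1 / 2) ^ j := fun j => by positivity
  have hs1 : ∀ j : ℕ, ((1 : ℝ) / 2) ^ j ≤ 1 := fun j => pow_le_one₀ (by norm_num) (by norm_num)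
  have hδ : ∀ j ≤ n, ε / (1 / 2) ^ j ≤ 1 := by
    intro j hj
    rw [div_le_one (hs0 j)]
    exact hn2.trans (pow_le_pow_of_le_one (by norm_num) (by norm_num) hj)
  have hη : ∀ j : ℕ, ε * (1 / 2) ^ j ∈ Set.Icc (0 : ℝ) (1 / 2) := fun j =>
    ⟨(mul_pos hε0 (hs0 j)).le, (mul_le_of_le_one_right hε0.le (hs1 j)).trans hε1.le⟩
  let R : ℕ → ℝ → ℂ := fun j x => α x * φ (x / (1 / 2) ^ j) * qEps ε x ^ μ
  let g : ℕ → ℝ → ℂ := fun j x => α x * ψ (x / (1 / 2) ^ j) * qEps ε x ^ μ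
  have hRg : ∀ j, R j = R (j + 1) + g j := by
    intro j
    funext x
    have : x / (1 / 2) ^ (j + 1) = 2 * (x / (1 / 2) ^ j) := by rw [pow_succ]; field_simp
    simp only [R, g, ψ, Pi.add_apply, this]
    ring
  have hg : ∀ j ≤ n, N (g j) ≤ C2 := fun j hj =>
    (hterm ψ hψ hψs _ (hs0 j)).2.trans
      (hC2 _ ⟨(hs0 j).le, hs1 j⟩ _ ⟨(div_pos hε0 (hs0 j)).le, hδ j hj⟩ _ (hη j))
  have hRn : N (R n) ≤ C1 := by
    refine (hterm φ hφ hφs _ (hs0 n)).2.trans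
      (hC1 _ ⟨(hs0 n).le, hs1 n⟩ _ ⟨?_, hδ n le_rfl⟩ _ (hη n))
    rw [le_div_iff₀ (hs0 n)]
    rw [pow_succ] at hn1
    linarith
  have htel : ∀ m : ℕ, m ≤ n → N (R 0) ≤ N (R m) + m * C2 := by
    intro m
    induction m with
    | zero => intro _; simp
    | succ m ih =>
      intro hm
      have h1 := ih (by omega)
      have h2 := hNadd _ _ (hterm φ hφ hφs _ (hs0 (m + 1))).1 (hterm ψ hψ hψs _ (hs0 m)).1
      change N (R (m + 1) + g m) ≤ N (R (m + 1)) + N (g m) at h2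
      rw [← hRg] at h2
      have h3 := hg m (by omega)
      push_cast
      linarith
  have hR0 : (fun x => α x * qEps ε x ^ μ) = R 0 := by
    funext x
    by_cases hx : α x = 0
    · simp [R, hx]
    · have := hαsupp (subset_tsupport _ hx)
      simp [R, hφ1 x (abs_le.mpr this)]
  -- `n ≥ 1` because `ε < 1/2`, so the number `n + 1` of terms is `O(n)`.
  have hn : (1 : ℝ) ≤ n := by
    have : n ≠ 0 := by
      rintro rfl
      norm_num at hn1
      linarith
    exact_mod_cast Nat.one_le_iff_ne_zero.mpr this
  have hnlog : n * Real.log 2 ≤ |Real.log ε| := by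
    have h1 := Real.log_le_log hε0 hn2
    rw [Real.log_pow, one_div, Real.log_inv] at h1
    have h2 := neg_le_abs (Real.log ε)
    linarith
  rw [hR0, div_mul_eq_mul_div, le_div_iff₀ hlog2]
  calc N (R 0) * Real.log 2 ≤ ((|C1| + |C2| + 1) * n) * Real.log 2 := by
        refine mul_le_mul_of_nonneg_right ?_ hlog2.le
        have h1 := htel n le_rfl
        nlinarith [le_abs_self C1, le_abs_self C2, abs_nonneg C1, abs_nonneg C2]
    _ = (|C1| + |C2| + 1) * (n * Real.log 2) := by ring
    _ ≤ _ := mul_le_mul_of_nonneg_left hnlog (by positivity)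
end

section
/- Let N be a seminorm on 𝔉, homogeneous of degree r, such that N(f) ≤ S_k(f) for every f ∈ 𝔉 supported in [−2,2]. Let (f_ε) be a family homogeneous of degree κ ∈ ℂ, (τ_ε) a truncation family with constant C_tr, and u_ε = τ_ε·f_ε. Suppose S_f is a constant bounding S_k(f_ε; [−2,−1]) and S_k(f_ε; [1,2]) for all 0 < ε < 1, and also bounding S_k(f_1; [−2,2]). Then there exists a constant C, depending only on k, such that for all ε ∈ (0,1]: N(u_ε) ≤ C·C_tr·S_f·(ε^{Re κ − r} + ∫_ε^1 t^{Re κ − r − 1} dt). -/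
/-! Fix a plateau function `Ψ`, equal to `1` on `[-1, 1]` and vanishing for `|x| ≥ 3/2`. For a
ratio `q ≥ 1` with `q^n = 1/ε` put `t_i = ε q^i`. As `u_ε` lives on `[-1, 1]`,
`u_ε = Ψ(x/t_n) u_ε = Ψ(x/ε) u_ε + ∑_{i<n} Φ(x/t_i) u_ε` with `Φ(y) = Ψ(y/q) - Ψ(y)`.

By homogeneity (`seminorm_piece_le`) a piece `F(x/t) u_ε` has seminorm at most
`t^{Re κ - r} ‖F‖_{C^k} C_tr S_k(f_{ε/t}; supp F)` up to a factor depending on `k` only. The piece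
with `F = Ψ`, `t = ε` contributes `ε^{Re κ - r}`.

A decomposition with fixed ratio `q = 2` would lose a factor exponential in `|Re κ - r|`, which the
claim does not allow. Instead `q` is taken close to `1`: then `Φ` is supported in `1 ≤ |x| ≤ 2` and
`‖Φ‖_{C^k} = O(q - 1)` (`norm_iteratedDeriv_dilation_sub_le`), and
`∑ t_i^a (q - 1) = ∑ t_i^{a-1} (t_{i+1} - t_i)` is a Riemann sum of `∫_ε^1 t^{a-1} dt`, within a
factor `2` of it once `q^{|a-1|} ≤ 2` (`rpow_mul_sub_one_le_integral`). -/

open MeasureTheory Real Complex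

/-- `S_k(f; J)² = Σ_{j≤k} ∫_J |f^{(j)}|²`. -/
noncomputable def sobolevOn (k : ℕ) (f : ℝ → ℂ) (J : Set ℝ) : ℝ :=
  Real.sqrt (∑ j ∈ Finset.range (k + 1), ∫ x in J, ‖iteratedDeriv j f x‖ ^ 2)

/-! ### Sobolev bounds for products -/

/-- The Leibniz rule as a pointwise estimate. `B` may depend on `x`: it is applied both with a
uniform bound and with `B = ∑ ‖G⁽ⁱ⁾ x‖`. -/
lemma norm_iteratedDeriv_mul_le_of_bounds {k : ℕ} {F G : ℝ → ℂ} (hF : ContDiff ℝ (⊤ : ℕ∞) F)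
    (hG : ContDiff ℝ (⊤ : ℕ∞) G) {x A B : ℝ}
    (hA : ∀ i ≤ k, ‖iteratedDeriv i F x‖ ≤ A) (hB : ∀ i ≤ k, ‖iteratedDeriv i G x‖ ≤ B)
    {j : ℕ} (hj : j ≤ k) :
    ‖iteratedDeriv j (fun y => F y * G y) x‖ ≤ 2 ^ k * A * B := by
  have hA0 : 0 ≤ A := (norm_nonneg _).trans (hA 0 (Nat.zero_le _))
  have hB0 : 0 ≤ B := (norm_nonneg _).trans (hB 0 (Nat.zero_le _))
  have h := norm_iteratedFDeriv_mul_le (𝕜 := ℝ) hF hG x (n := j) (by exact_mod_cast le_top)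
  simp only [norm_iteratedFDeriv_eq_norm_iteratedDeriv] at h
  calc _ ≤ _ := h
    _ ≤ ∑ i ∈ Finset.range (j + 1), (j.choose i : ℝ) * (A * B) := by
        refine Finset.sum_le_sum fun i hi => ?_
        have hi' : i ≤ j := Nat.lt_succ_iff.1 (Finset.mem_range.1 hi)
        rw [mul_assoc]
        gcongr
        · exact hA i (hi'.trans hj)
        · exact hB (j - i) ((Nat.sub_le _ _).trans hj)
    _ = 2 ^ j * (A * B) := by
        rw [← Finset.sum_mul]; congr 1; exact_mod_cast Nat.sum_range_choose j
    _ ≤ 2 ^ k * (A * B) := by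
        gcongr
        norm_num
    _ = _ := by ring

lemma integrableOn_norm_iteratedDeriv_sq {g : ℝ → ℂ} (hg : ContDiff ℝ (⊤ : ℕ∞) g) (j : ℕ)
    {J : Set ℝ} (hJ : IsCompact J) :
    IntegrableOn (fun x => ‖iteratedDeriv j g x‖ ^ 2) J :=
  (((hg.continuous_iteratedDeriv j (by exact_mod_cast le_top)).norm.pow 2).continuousOn
    ).integrableOn_compact hJ

lemma sobolevOn_sum_nonneg (k : ℕ) (g : ℝ → ℂ) (J : Set ℝ) :
    0 ≤ ∑ i ∈ Finset.range (k + 1), ∫ x in J, ‖iteratedDeriv i g x‖ ^ 2 :=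
  Finset.sum_nonneg fun _ _ => integral_nonneg fun _ => sq_nonneg _

/-- Multiplication by a function supported in `J` with derivatives bounded by `B` is bounded from
`S_k(·; J)` to `S_k`, with norm `O(B)`. -/
lemma sobolev_mul_le {k : ℕ} {F g : ℝ → ℂ} (hF : ContDiff ℝ (⊤ : ℕ∞) F)
    (hg : ContDiff ℝ (⊤ : ℕ∞) g) {J : Set ℝ} (hJ : IsCompact J) (hFJ : tsupport F ⊆ J) {B : ℝ}
    (hB : ∀ j ≤ k, ∀ x, ‖iteratedDeriv j F x‖ ≤ B) :
    sobolev k (fun x => F x * g x) ≤ 2 ^ k * (k + 1) * B * sobolevOn k g J := by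
  have hB0 : 0 ≤ B := (norm_nonneg _).trans (hB 0 (Nat.zero_le _) 0)
  have hFg : ContDiff ℝ (⊤ : ℕ∞) (fun x => F x * g x) := hF.mul hg
  have hpt : ∀ j ≤ k, ∀ x, ‖iteratedDeriv j (fun x => F x * g x) x‖ ^ 2 ≤
      (2 ^ k * B) ^ 2 * (k + 1) * ∑ i ∈ Finset.range (k + 1), ‖iteratedDeriv i g x‖ ^ 2 := by
    intro j hj x
    have h1 := norm_iteratedDeriv_mul_le_of_bounds hF hg (x := x) (k := k) (fun i hi => hB i hi x)
      (B := ∑ i ∈ Finset.range (k + 1), ‖iteratedDeriv i g x‖) (fun i hi =>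
        Finset.single_le_sum (f := fun i => ‖iteratedDeriv i g x‖) (fun _ _ => norm_nonneg _)
          (Finset.mem_range.2 (Nat.lt_succ_of_le hi))) hj
    have h2 := sq_sum_le_card_mul_sum_sq (s := Finset.range (k + 1))
      (f := fun i => ‖iteratedDeriv i g x‖)
    rw [Finset.card_range] at h2
    push_cast at h2
    calc _ ≤ (2 ^ k * B * ∑ i ∈ Finset.range (k + 1), ‖iteratedDeriv i g x‖) ^ 2 :=
          pow_le_pow_left₀ (norm_nonneg _) h1 2
      _ = (2 ^ k * B) ^ 2 * (∑ i ∈ Finset.range (k + 1), ‖iteratedDeriv i g x‖) ^ 2 := by ring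
      _ ≤ (2 ^ k * B) ^ 2 * ((k + 1) * ∑ i ∈ Finset.range (k + 1), ‖iteratedDeriv i g x‖ ^ 2) := by
          gcongr
      _ = _ := by ring
  set T := ∑ i ∈ Finset.range (k + 1), ∫ x in J, ‖iteratedDeriv i g x‖ ^ 2 with hT
  have hint : ∀ j ∈ Finset.range (k + 1),
      ∫ x, ‖iteratedDeriv j (fun x => F x * g x) x‖ ^ 2 ≤ (2 ^ k * B) ^ 2 * (k + 1) * T := by
    intro j hj
    have hj' : j ≤ k := Nat.lt_succ_iff.1 (Finset.mem_range.1 hj)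
    rw [← setIntegral_eq_integral_of_forall_compl_eq_zero (s := J)]
    · rw [hT, ← integral_finsetSum _
        (fun i _ => integrableOn_norm_iteratedDeriv_sq hg i hJ), ← integral_const_mul]
      refine integral_mono (integrableOn_norm_iteratedDeriv_sq hFg j hJ) ?_ (hpt j hj')
      exact (integrable_finsetSum _
        (fun i _ => integrableOn_norm_iteratedDeriv_sq hg i hJ)).const_mul _
    · intro x hx
      rw [← norm_iteratedFDeriv_eq_norm_iteratedDeriv]
      have : x ∉ tsupport (fun x => F x * g x) := fun h => hx (hFJ (tsupport_mul_subset_left h))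
      have := fun h => this (support_iteratedFDeriv_subset (𝕜 := ℝ) j h)
      rw [Function.notMem_support.1 this]
      simp
  have hT0 : 0 ≤ T := sobolevOn_sum_nonneg k g J
  unfold sobolev sobolevOn
  rw [← hT]
  apply Real.sqrt_le_iff.2 ⟨by positivity, ?_⟩
  calc _ ≤ ∑ j ∈ Finset.range (k + 1), (2 ^ k * B) ^ 2 * (k + 1) * T := Finset.sum_le_sum hint
    _ = _ := by
      rw [Finset.sum_const, Finset.card_range, mul_pow _ (√T), Real.sq_sqrt hT0]
      simp only [nsmul_eq_mul]
      push_cast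
      ring

lemma sobolevOn_mono {k : ℕ} {g : ℝ → ℂ} (hg : ContDiff ℝ (⊤ : ℕ∞) g) {I J : Set ℝ}
    (hJ : IsCompact J) (hIJ : I ⊆ J) : sobolevOn k g I ≤ sobolevOn k g J :=
  Real.sqrt_le_sqrt <| Finset.sum_le_sum fun i _ =>
    setIntegral_mono_set (integrableOn_norm_iteratedDeriv_sq hg i hJ)
      (ae_of_all _ fun x => by positivity) hIJ.eventuallyLE

lemma sobolevOn_union_le {k : ℕ} {g : ℝ → ℂ} (hg : ContDiff ℝ (⊤ : ℕ∞) g) {I J : Set ℝ}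
    (hI : IsCompact I) (hJ : IsCompact J) (hIJ : Disjoint I J) :
    sobolevOn k g (I ∪ J) ≤ sobolevOn k g I + sobolevOn k g J := by
  unfold sobolevOn
  rw [Finset.sum_congr rfl fun i _ => setIntegral_union hIJ hJ.measurableSet
    (integrableOn_norm_iteratedDeriv_sq hg i hI) (integrableOn_norm_iteratedDeriv_sq hg i hJ),
    Finset.sum_add_distrib]
  refine Real.sqrt_le_iff.2 ⟨by positivity, ?_⟩
  rw [add_sq, Real.sq_sqrt (sobolevOn_sum_nonneg k g I), Real.sq_sqrt (sobolevOn_sum_nonneg k g J)]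
  have := mul_nonneg (Real.sqrt_nonneg
    (∑ i ∈ Finset.range (k + 1), ∫ x in I, ‖iteratedDeriv i g x‖ ^ 2)) (Real.sqrt_nonneg
    (∑ i ∈ Finset.range (k + 1), ∫ x in J, ‖iteratedDeriv i g x‖ ^ 2))
  linarith

/-! ### Cutoff functions -/

/-- A plateau function, together with a single bound `A` for its derivatives up to order `k + 1`
(the extra derivative is spent on `norm_iteratedDeriv_dilation_sub_le`). -/
lemma exists_plateau (k : ℕ) : ∃ (Ψ : ℝ → ℂ) (A : ℝ), ContDiff ℝ (⊤ : ℕ∞) Ψ ∧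
    (∀ x, |x| ≤ 1 → Ψ x = 1) ∧ (∀ x, 3 / 2 ≤ |x| → Ψ x = 0) ∧ 0 < A ∧
    ∀ j ≤ k + 1, ∀ x, ‖iteratedDeriv j Ψ x‖ ≤ A := by
  let b : ContDiffBump (0 : ℝ) := ⟨1, 3 / 2, by norm_num, by norm_num⟩
  have hb : ContDiff ℝ (⊤ : ℕ∞) (fun x => ((b x : ℝ) : ℂ)) :=
    Complex.ofRealCLM.contDiff.comp b.contDiff
  have hcs : HasCompactSupport (fun x => ((b x : ℝ) : ℂ)) :=
    b.hasCompactSupport.comp_left (g := fun y : ℝ => (y : ℂ)) Complex.ofReal_zero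
  have hbd : ∀ j, ∃ C, ∀ x, ‖iteratedDeriv j (fun x => ((b x : ℝ) : ℂ)) x‖ ≤ C := by
    intro j
    have := (hcs.iteratedFDeriv (𝕜 := ℝ) j).exists_bound_of_continuous
      (hb.continuous_iteratedFDeriv (m := j) (by exact_mod_cast le_top))
    simpa only [norm_iteratedFDeriv_eq_norm_iteratedDeriv] using this
  choose C hC using hbd
  have hC0 : ∀ j, 0 ≤ C j := fun j => (norm_nonneg _).trans (hC j 0)
  refine ⟨_, 1 + ∑ j ∈ Finset.range (k + 2), C j, hb, ?_, ?_, ?_, ?_⟩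
  · intro x hx
    rw [b.one_of_mem_closedBall (by simpa [b] using hx)]; simp
  · intro x hx
    rw [b.zero_of_le_dist (by simpa [b] using hx)]; simp
  · have := Finset.sum_nonneg fun j (_ : j ∈ Finset.range (k + 2)) => hC0 j
    positivity
  · intro j hj x
    have := Finset.single_le_sum (f := C) (fun j _ => hC0 j)
      (Finset.mem_range.2 (Nat.lt_succ_of_le hj))
    linarith [hC j x]

/-- Dilating a plateau function by a factor `p` close to `1` changes it only on `1 ≤ |x| ≤ 2`. -/
lemma tsupport_dilation_sub_subset {Ψ : ℝ → ℂ} (h1 : ∀ x, |x| ≤ 1 → Ψ x = 1)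
    (h0 : ∀ x, 3 / 2 ≤ |x| → Ψ x = 0) {p : ℝ} (hp : 3 / 4 ≤ p) (hp1 : p ≤ 1) :
    tsupport (fun x => Ψ (p * x) - Ψ x) ⊆ Set.Icc (-2) (-1) ∪ Set.Icc 1 2 := by
  refine closure_minimal ?_ (isClosed_Icc.union isClosed_Icc)
  intro x hx
  by_contra hn
  apply hx
  have hpx : |p * x| = p * |x| := by rw [abs_mul, abs_of_nonneg (by linarith)]
  have : |x| < 1 ∨ 2 < |x| := by
    simp only [Set.mem_union, Set.mem_Icc, not_or, not_and, not_le] at hn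
    rcases lt_or_ge |x| 1 with h | h
    · exact Or.inl h
    · right
      rcases le_abs.1 h with h | h
      · exact lt_abs.2 (Or.inl (hn.2 h))
      · refine lt_abs.2 (Or.inr ?_)
        by_contra h'
        linarith [hn.1 (by linarith)]
  rcases this with h | h
  · have : |p * x| ≤ 1 := by rw [hpx]; nlinarith [abs_nonneg x]
    simp [h1 _ this, h1 _ h.le]
  · have : 3 / 2 ≤ |p * x| := by rw [hpx]; nlinarith [abs_nonneg x]
    simp [h0 _ this, h0 x (by linarith)]

/-- The derivatives of `Ψ(p ·) - Ψ` are `O(1 - p)`: the small factor turns the sum over scales into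
a Riemann sum. -/
lemma norm_iteratedDeriv_dilation_sub_le {k : ℕ} {Ψ : ℝ → ℂ} {A : ℝ}
    (hΨ : ContDiff ℝ (⊤ : ℕ∞) Ψ) (h1 : ∀ x, |x| ≤ 1 → Ψ x = 1)
    (h0 : ∀ x, 3 / 2 ≤ |x| → Ψ x = 0) (hA : ∀ j ≤ k + 1, ∀ x, ‖iteratedDeriv j Ψ x‖ ≤ A)
    {p : ℝ} (hp : 3 / 4 ≤ p) (hp1 : p ≤ 1) {j : ℕ} (hj : j ≤ k) (x : ℝ) :
    ‖iteratedDeriv j (fun x => Ψ (p * x) - Ψ x) x‖ ≤ (k + 2) * A * (1 - p) := by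
  have hA0 : 0 ≤ A := (norm_nonneg _).trans (hA 0 (Nat.zero_le _) 0)
  by_cases hx : x ∈ tsupport (fun x => Ψ (p * x) - Ψ x)
  swap
  · have := fun h => hx (support_iteratedFDeriv_subset (𝕜 := ℝ) j h)
    rw [← norm_iteratedFDeriv_eq_norm_iteratedDeriv, Function.notMem_support.1 this, norm_zero]
    have : 0 ≤ 1 - p := by linarith
    positivity
  have hx2 : |x| ≤ 2 := by
    rcases tsupport_dilation_sub_subset h1 h0 hp hp1 hx with h | h <;>
      exact abs_le.2 ⟨by linarith [h.1], by linarith [h.2]⟩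
  have hΨj : ContDiff ℝ j Ψ := hΨ.of_le (by exact_mod_cast le_top)
  have hdil := iteratedDeriv_comp_const_smul hΨj p
  have heq : iteratedDeriv j (fun x => Ψ (p * x) - Ψ x) x =
      p ^ j • iteratedDeriv j Ψ (p * x) - iteratedDeriv j Ψ x := by
    have hc : ContDiff ℝ j (fun x => Ψ (p * x)) := hΨj.comp (contDiff_const.mul contDiff_id)
    have := iteratedDeriv_sub (x := x) hc.contDiffAt hΨj.contDiffAt
    rw [hdil] at this
    exact this
  have hlip : ‖iteratedDeriv j Ψ (p * x) - iteratedDeriv j Ψ x‖ ≤ A * ‖p * x - x‖ := by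
    refine Convex.norm_image_sub_le_of_norm_deriv_le (s := Set.univ) (𝕜 := ℝ) ?_ ?_ convex_univ
      trivial trivial
    · intro y _
      exact (hΨ.differentiable_iteratedDeriv j (by exact_mod_cast WithTop.coe_lt_top j)) y
    · intro y _
      rw [← iteratedDeriv_succ]
      exact hA _ (by omega) y
  have hpx : ‖p * x - x‖ ≤ (1 - p) * 2 := by
    rw [show p * x - x = -((1 - p) * x) by ring, norm_neg, norm_mul, Real.norm_eq_abs,
      Real.norm_eq_abs, abs_of_nonneg (by linarith : 0 ≤ 1 - p)]
    exact mul_le_mul_of_nonneg_left hx2 (by linarith)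
  have hpow : 1 - p ^ j ≤ k * (1 - p) := by
    have hb := one_add_mul_le_pow (a := p - 1) (by linarith) j
    rw [add_sub_cancel] at hb
    have : (j : ℝ) * (1 - p) ≤ k * (1 - p) :=
      mul_le_mul_of_nonneg_right (by exact_mod_cast hj) (by linarith)
    linarith
  have hpow0 : 0 ≤ 1 - p ^ j := by
    have := pow_le_one₀ (n := j) (by linarith : 0 ≤ p) hp1
    linarith
  rw [heq, show p ^ j • iteratedDeriv j Ψ (p * x) - iteratedDeriv j Ψ x =
    (iteratedDeriv j Ψ (p * x) - iteratedDeriv j Ψ x) - (1 - p ^ j) • iteratedDeriv j Ψ (p * x) by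
      rw [sub_smul, one_smul]; abel]
  calc _ ≤ _ := norm_sub_le _ _
    _ ≤ A * ((1 - p) * 2) + k * (1 - p) * A := by
        rw [norm_smul, Real.norm_eq_abs, abs_of_nonneg hpow0]
        exact add_le_add (hlip.trans (by gcongr))
          (mul_le_mul hpow (hA j (by omega) _) (norm_nonneg _) (hpow0.trans hpow))
    _ = _ := by ring

/-! ### One localized piece, rescaled to unit size -/

/-- The piece `x ↦ F(x/t) · τ(x) · f_ε(x)` living at scale `t` is the dilation by `t` of
`t^κ · (F · τ(t ·) · f_{ε/t})`, a function supported in `[-2, 2]`; this gives the factor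
`t^{Re κ - r}`. -/
lemma seminorm_piece_le {k : ℕ} {N : (ℝ → ℂ) → ℝ} {r : ℝ} {κ : ℂ} {f : ℝ → ℝ → ℂ}
    (hsm : ∀ (a : ℂ) (g), IsCc g → N (fun x => a * g x) = ‖a‖ * N g)
    (hhom : ∀ s : ℝ, 0 < s → ∀ g, IsCc g → N (fun x => g (x / s)) = s ^ (-r) * N g)
    (hbd : ∀ g, IsCc g → tsupport g ⊆ Set.Icc (-2 : ℝ) 2 → N g ≤ sobolev k g)
    (hf : ∀ ε : ℝ, 0 < ε → ContDiff ℝ (⊤ : ℕ∞) (f ε))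
    (hfhom : ∀ t : ℝ, 0 < t → ∀ ε : ℝ, 0 < ε → ∀ x : ℝ,
      f (t * ε) (t * x) = (t : ℂ) ^ κ * f ε x)
    {τ : ℝ → ℂ} {Ctr : ℝ} (hτ : ContDiff ℝ (⊤ : ℕ∞) τ)
    (hτb : ∀ j ≤ k, ∀ x : ℝ, ‖iteratedDeriv j τ x‖ ≤ Ctr)
    {F : ℝ → ℂ} {B : ℝ} (hF : ContDiff ℝ (⊤ : ℕ∞) F)
    (hFb : ∀ j ≤ k, ∀ x : ℝ, ‖iteratedDeriv j F x‖ ≤ B)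
    {J : Set ℝ} (hJ : IsCompact J) (hJ2 : J ⊆ Set.Icc (-2) 2) (hFJ : tsupport F ⊆ J)
    {ε t S : ℝ} (hε : 0 < ε) (ht : 0 < t) (ht1 : t ≤ 1) (hS : sobolevOn k (f (ε / t)) J ≤ S) :
    IsCc (fun x => F (x / t) * (τ x * f ε x)) ∧
    N (fun x => F (x / t) * (τ x * f ε x)) ≤
      t ^ (κ.re - r) * (2 ^ k * (k + 1) * (2 ^ k * B * Ctr) * S) := by
  have hεt : 0 < ε / t := by positivity
  have hC0 : 0 ≤ Ctr := (norm_nonneg _).trans (hτb 0 (Nat.zero_le _) 0)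
  have hB0 : 0 ≤ B := (norm_nonneg _).trans (hFb 0 (Nat.zero_le _) 0)
  have hτt : ContDiff ℝ (⊤ : ℕ∞) (fun y => τ (t * y)) := hτ.comp (contDiff_const.mul contDiff_id)
  have hτtb : ∀ j ≤ k, ∀ x : ℝ, ‖iteratedDeriv j (fun y => τ (t * y)) x‖ ≤ Ctr := by
    intro j hj x
    have h := iteratedDeriv_comp_const_smul
      (hτ.of_le (by exact_mod_cast le_top) : ContDiff ℝ j τ) t
    rw [h]
    simp only [norm_smul, norm_pow, Real.norm_eq_abs, abs_of_pos ht]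
    calc _ ≤ 1 * Ctr := by
          gcongr
          · exact pow_le_one₀ ht.le ht1
          · exact hτb j hj _
      _ = _ := one_mul _
  have hFτ : ContDiff ℝ (⊤ : ℕ∞) (fun y => F y * τ (t * y)) := hF.mul hτt
  have hFτJ : tsupport (fun y => F y * τ (t * y)) ⊆ J := tsupport_mul_subset_left.trans hFJ
  set G : ℝ → ℂ := fun y => F y * τ (t * y) * f (ε / t) y with hG
  have hGJ : tsupport G ⊆ J := tsupport_mul_subset_left.trans hFτJ
  have hGcc : IsCc G :=
    ⟨hFτ.mul (hf _ hεt), hJ.of_isClosed_subset (isClosed_tsupport _) hGJ⟩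
  have hGN : N G ≤ 2 ^ k * (k + 1) * (2 ^ k * B * Ctr) * S :=
    calc N G ≤ sobolev k G := hbd G hGcc (hGJ.trans hJ2)
      _ ≤ 2 ^ k * (k + 1) * (2 ^ k * B * Ctr) * sobolevOn k (f (ε / t)) J :=
          sobolev_mul_le hFτ (hf _ hεt) hJ hFτJ fun j hj x =>
            norm_iteratedDeriv_mul_le_of_bounds hF hτt (fun i hi => hFb i hi x)
              (fun i hi => hτtb i hi x) hj
      _ ≤ _ := by gcongr
  have hcGcc : IsCc (fun y => (t : ℂ) ^ κ * G y) :=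
    ⟨contDiff_const.mul hGcc.1, hGcc.2.mul_left⟩
  have hpiece : (fun x => F (x / t) * (τ x * f ε x)) =
      fun x => (fun y => (t : ℂ) ^ κ * G y) (x / t) := by
    funext x
    have h := hfhom t ht (ε / t) hεt (x / t)
    have h2 : t * (x / t) = x := by field_simp
    rw [mul_div_cancel₀ _ ht.ne', h2] at h
    simp only [hG, h2, h]
    ring
  refine ⟨?_, ?_⟩
  · rw [hpiece]
    refine ⟨hcGcc.1.comp (contDiff_id.div_const t), ?_⟩
    have := hcGcc.2.comp_homeomorph (Homeomorph.mulRight₀ t⁻¹ (inv_ne_zero ht.ne'))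
    simpa [div_eq_mul_inv, Function.comp_def] using this
  · rw [hpiece, hhom t ht _ hcGcc, hsm _ _ hGcc, Complex.norm_cpow_eq_rpow_re_of_pos ht,
      ← mul_assoc, ← Real.rpow_add ht, neg_add_eq_sub]
    gcongr

/-! ### Riemann sums for `∫ t^{a-1} dt` -/

/-- On `[t, tq]` the integrand varies by a factor at most `q^{|a-1|}`, which is why the constant `2`
does not depend on `a`. -/
lemma rpow_mul_sub_one_le_integral {a t q : ℝ} (ht : 0 < t) (hq : 1 ≤ q)
    (hqa : q ^ |a - 1| ≤ 2) :
    t ^ a * (q - 1) ≤ 2 * ∫ s in t..t * q, s ^ (a - 1) := by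
  have htq : t ≤ t * q := le_mul_of_one_le_right ht.le hq
  have hle : ∀ s ∈ Set.Icc t (t * q), t ^ (a - 1) ≤ 2 * s ^ (a - 1) := by
    intro s hs
    have hs0 : 0 < s := ht.trans_le hs.1
    have h1 : 1 ≤ s / t := (one_le_div ht).2 hs.1
    have h2 : s / t ≤ q := by rw [div_le_iff₀ ht]; linarith [hs.2]
    have h3 : (s / t) ^ (-(a - 1)) ≤ 2 :=
      calc (s / t) ^ (-(a - 1)) ≤ (s / t) ^ |a - 1| :=
            Real.rpow_le_rpow_of_exponent_le h1 (neg_le_abs _)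
        _ ≤ q ^ |a - 1| := Real.rpow_le_rpow (by linarith) h2 (abs_nonneg _)
        _ ≤ 2 := hqa
    rw [Real.rpow_neg (by linarith), Real.div_rpow hs0.le ht.le, inv_div,
      div_le_iff₀ (by positivity)] at h3
    exact h3
  have hint : IntervalIntegrable (fun s : ℝ => s ^ (a - 1)) volume t (t * q) :=
    intervalIntegral.intervalIntegrable_rpow (Or.inr (by
      rw [Set.uIcc_of_le htq]; exact fun h => absurd h.1 (not_le.2 ht)))
  have := intervalIntegral.integral_mono_on htq intervalIntegrable_const (hint.const_mul 2) hle
  rw [intervalIntegral.integral_const, intervalIntegral.integral_const_mul, smul_eq_mul] at this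
  calc t ^ a * (q - 1) = (t * q - t) * t ^ (a - 1) := by
        rw [Real.rpow_sub_one ht.ne']; field_simp
    _ ≤ _ := this

/-- `[ε, 1]` can be cut into finitely many geometric steps whose ratio `q` is as close to `1` as the
other lemmas need. -/
lemma exists_ratio {ε b : ℝ} (hε : 0 < ε) (hε1 : ε ≤ 1) :
    ∃ (n : ℕ) (q : ℝ), 1 ≤ q ∧ q ≤ 4 / 3 ∧ q ^ b ≤ 2 ∧ ε * q ^ n = 1 := by
  have hL : 0 ≤ -Real.log ε := by linarith [Real.log_nonpos hε.le hε1]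
  have ht : Filter.Tendsto (fun n : ℕ => Real.exp (-Real.log ε / n)) Filter.atTop (nhds 1) := by
    have := (Real.continuous_exp.tendsto 0).comp
      (tendsto_const_div_atTop_nhds_zero_nat (-Real.log ε))
    simpa [Function.comp_def] using this
  have ht2 : Filter.Tendsto (fun n : ℕ => Real.exp (-Real.log ε / n) ^ b) Filter.atTop
      (nhds 1) := by
    have := ht.rpow_const (p := b) (Or.inl one_ne_zero)
    simpa using this
  obtain ⟨n, h1, h2, hn⟩ := ((ht.eventually_le_const (by norm_num : (1 : ℝ) < 4 / 3)).and
    ((ht2.eventually_le_const (by norm_num : (1 : ℝ) < 2)).and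
      (Filter.eventually_ge_atTop 1))).exists
  refine ⟨n, _, Real.one_le_exp (by positivity), h1, h2, ?_⟩
  have hn0 : (n : ℝ) ≠ 0 := by exact_mod_cast (by omega : n ≠ 0)
  rw [← Real.exp_nat_mul, mul_div_cancel₀ _ hn0, Real.exp_neg, Real.exp_log hε,
    mul_inv_cancel₀ hε.ne']

/-! ### Summation over scales -/

/-- Dyadic decomposition bound: for every `k` there is `C > 0`, depending only
on `k`, such that for every seminorm `N` on `𝔉` homogeneous of degree `r` and
bounded by `S_k` on functions supported in `[−2,2]`, every family `(f_ε)`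
homogeneous of degree `κ`, every truncation family `(τ_ε)` with constant
`C_tr`, and every bound `S_f` as described, the functions `u_ε = τ_ε·f_ε`
satisfy `N(u_ε) ≤ C·C_tr·S_f·(ε^{Re κ − r} + ∫_ε^1 t^{Re κ − r − 1} dt)`. -/
theorem stmt6 (k : ℕ) :
    ∃ C > (0 : ℝ),
      ∀ (N : (ℝ → ℂ) → ℝ) (r : ℝ) (κ : ℂ)
        (f : ℝ → ℝ → ℂ) (τ : ℝ → ℝ → ℂ) (Ctr Sf : ℝ),
        (∀ g, IsCc g → 0 ≤ N g) →
        (∀ g₁ g₂, IsCc g₁ → IsCc g₂ → N (g₁ + g₂) ≤ N g₁ + N g₂) →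
        (∀ (a : ℂ) (g), IsCc g → N (fun x => a * g x) = ‖a‖ * N g) →
        -- homogeneity of degree `r`: `N(h_s g) = s^{−r} N(g)`
        (∀ s : ℝ, 0 < s → ∀ g, IsCc g →
          N (fun x => g (x / s)) = s ^ (-r) * N g) →
        (∀ g, IsCc g → tsupport g ⊆ Set.Icc (-2 : ℝ) 2 → N g ≤ sobolev k g) →
        -- `(f_ε)` is a family of smooth functions, homogeneous of degree `κ`
        (∀ ε : ℝ, 0 < ε → ContDiff ℝ (⊤ : ℕ∞) (f ε)) →
        (∀ t : ℝ, 0 < t → ∀ ε : ℝ, 0 < ε → ∀ x : ℝ,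
          f (t * ε) (t * x) = (t : ℂ) ^ κ * f ε x) →
        -- `(τ_ε)` is a truncation family with constant `C_tr`
        (∀ ε ∈ Set.Ioc (0 : ℝ) 1, IsCc (τ ε) ∧
          tsupport (τ ε) ⊆ Set.Icc (-1 : ℝ) 1 ∧
          ∀ j ≤ k, ∀ x : ℝ, ‖iteratedDeriv j (τ ε) x‖ ≤ Ctr) →
        -- `S_f` bounds the relevant Sobolev norms
        (∀ ε ∈ Set.Ioo (0 : ℝ) 1,
          sobolevOn k (f ε) (Set.Icc (-2 : ℝ) (-1)) ≤ Sf ∧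
          sobolevOn k (f ε) (Set.Icc (1 : ℝ) 2) ≤ Sf) →
        sobolevOn k (f 1) (Set.Icc (-2 : ℝ) 2) ≤ Sf →
        ∀ ε ∈ Set.Ioc (0 : ℝ) 1,
          N (fun x => τ ε x * f ε x) ≤
            C * Ctr * Sf * (ε ^ (κ.re - r) + ∫ t in ε..1, t ^ (κ.re - r - 1)) := by
  obtain ⟨Ψ, A, hΨ, hΨ1, hΨ0, hA, hΨA⟩ := exists_plateau k
  refine ⟨2 ^ k * (k + 1) * 2 ^ k * (4 * (k + 2)) * A, by positivity, ?_⟩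
  intro N r κ f τ Ctr Sf _ hadd hsm hhom hbd hf hfhom hτ hSf hSf1 ε hε
  obtain ⟨hτcc, hτs, hτb⟩ := hτ ε hε
  have hC0 : 0 ≤ Ctr := (norm_nonneg _).trans (hτb 0 (Nat.zero_le _) 0)
  have hS0 : 0 ≤ Sf := (Real.sqrt_nonneg _).trans hSf1
  obtain ⟨hε0, hε1⟩ := hε
  set a := κ.re - r with ha
  obtain ⟨n, q, hq1, hq43, hqa, hqn⟩ := exists_ratio (b := |a - 1|) hε0 hε1
  have hq0 : 0 < q := by linarith
  set J : Set ℝ := Set.Icc (-2) (-1) ∪ Set.Icc 1 2 with hJ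
  have hJc : IsCompact J := isCompact_Icc.union isCompact_Icc
  have hJ2 : J ⊆ Set.Icc (-2) 2 := by
    rintro x (h | h) <;> exact ⟨by linarith [h.1], by linarith [h.2]⟩
  have hSJ : ∀ t, ε ≤ t → sobolevOn k (f (ε / t)) J ≤ 2 * Sf := by
    intro t ht
    rcases ht.eq_or_lt with rfl | ht
    -- At the scale `t = ε` the family member is `f_1`, covered only by the bound on `[-2, 2]`.
    · rw [div_self hε0.ne']
      linarith [(sobolevOn_mono (k := k) (hf 1 one_pos) isCompact_Icc hJ2).trans hSf1]
    · have ht0 : 0 < t := hε0.trans ht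
      have hpos : 0 < ε / t := by positivity
      obtain ⟨h1, h2⟩ := hSf (ε / t) ⟨hpos, (div_lt_one ht0).2 ht⟩
      have := sobolevOn_union_le (k := k) (hf _ hpos) (isCompact_Icc (a := (-2 : ℝ)) (b := -1))
        (isCompact_Icc (a := (1 : ℝ)) (b := 2)) (by
          rw [Set.disjoint_left]; intro x h h'; linarith [h.2, h'.1])
      linarith
  have hp : 3 / 4 ≤ q⁻¹ := by
    rw [le_inv_comm₀ (by norm_num) hq0]; linarith
  have hp1 : q⁻¹ ≤ 1 := inv_le_one_of_one_le₀ hq1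
  have hΦ : ContDiff ℝ (⊤ : ℕ∞) (fun x => Ψ (q⁻¹ * x) - Ψ x) :=
    (hΨ.comp (contDiff_const.mul contDiff_id)).sub hΨ
  have hΨs : tsupport Ψ ⊆ Set.Icc (-2) 2 := by
    refine closure_minimal (fun x hx => abs_le.1 ?_) isClosed_Icc
    by_contra h
    exact hx (hΨ0 x (by linarith))
  set K : ℝ := 2 ^ k * (k + 1) * 2 ^ k * (4 * (k + 2)) * A * Ctr * Sf with hK
  have hK0 : 0 ≤ K := by positivity
  have hint : ∀ s t : ℝ, 0 < s → 0 < t →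
      IntervalIntegrable (fun x : ℝ => x ^ (a - 1)) volume s t := fun s t hs ht =>
    intervalIntegral.intervalIntegrable_rpow (Or.inr (Set.notMem_uIcc_of_lt hs ht))
  -- Induction over the scales: `Ψ(x/t_{i+1}) = Ψ(x/t_i) + Φ(x/t_i)`.
  have key : ∀ i ≤ n, IsCc (fun x => Ψ (x / (ε * q ^ i)) * (τ ε x * f ε x)) ∧
      N (fun x => Ψ (x / (ε * q ^ i)) * (τ ε x * f ε x)) ≤
        K * (ε ^ a + ∫ t in ε..(ε * q ^ i), t ^ (a - 1)) := by
    intro i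
    induction i with
    | zero =>
      intro _
      have h := seminorm_piece_le hsm hhom hbd hf hfhom hτcc.1 hτb hΨ
        (fun j hj x => hΨA j (by omega) x) isCompact_Icc subset_rfl hΨs hε0 hε0 hε1
        (S := Sf) (by rwa [div_self hε0.ne'])
      simp only [pow_zero, mul_one, intervalIntegral.integral_same, add_zero]
      refine ⟨h.1, h.2.trans ?_⟩
      rw [mul_comm]
      gcongr
      rw [hK]
      have : (0 : ℝ) ≤ k := Nat.cast_nonneg k
      calc _ = 2 ^ k * (k + 1) * 2 ^ k * 1 * A * Ctr * Sf := by ring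
        _ ≤ _ := by gcongr; linarith
    | succ i ih =>
      intro hi
      obtain ⟨hcc, hN⟩ := ih (by omega)
      set t := ε * q ^ i with htdef
      have hqi : 1 ≤ q ^ i := one_le_pow₀ hq1
      have ht0 : 0 < t := by positivity
      have hεt : ε ≤ t := le_mul_of_one_le_right hε0.le hqi
      have ht1 : t ≤ 1 := by
        rw [← hqn]
        exact mul_le_mul_of_nonneg_left (pow_le_pow_right₀ hq1 (by omega)) hε0.le
      have h := seminorm_piece_le hsm hhom hbd hf hfhom hτcc.1 hτb hΦ
        (fun j hj x => norm_iteratedDeriv_dilation_sub_le hΨ hΨ1 hΨ0 hΨA hp hp1 hj x) hJc hJ2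
        (tsupport_dilation_sub_subset hΨ1 hΨ0 hp hp1) hε0 ht0 ht1 (hSJ t hεt)
      have hsucc : ε * q ^ (i + 1) = t * q := by rw [htdef]; ring
      have hdec : (fun x => Ψ (x / (t * q)) * (τ ε x * f ε x)) =
          (fun x => Ψ (x / t) * (τ ε x * f ε x)) +
          fun x => (Ψ (q⁻¹ * (x / t)) - Ψ (x / t)) * (τ ε x * f ε x) := by
        funext x
        have : q⁻¹ * (x / t) = x / (t * q) := by field_simp
        simp only [Pi.add_apply, this]
        ring
      rw [hsucc, hdec]
      refine ⟨⟨hcc.1.add h.1.1, hcc.2.add h.1.2⟩, (hadd _ _ hcc h.1).trans ?_⟩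
      have hpq : 1 - q⁻¹ ≤ q - 1 := by
        have : q * q⁻¹ = 1 := mul_inv_cancel₀ hq0.ne'
        nlinarith [mul_nonneg (sub_nonneg.2 hq1) (sub_nonneg.2 hp1)]
      have hr := rpow_mul_sub_one_le_integral ht0 hq1 hqa
      have hnew : N (fun x => (Ψ (q⁻¹ * (x / t)) - Ψ (x / t)) * (τ ε x * f ε x)) ≤
          K * ∫ s in t..t * q, s ^ (a - 1) :=
        calc _ ≤ _ := h.2
          _ = K / 2 * (t ^ a * (1 - q⁻¹)) := by rw [hK]; ring
          _ ≤ K / 2 * (t ^ a * (q - 1)) := by gcongr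
          _ ≤ K / 2 * (2 * ∫ s in t..t * q, s ^ (a - 1)) := by gcongr
          _ = _ := by ring
      rw [← intervalIntegral.integral_add_adjacent_intervals (hint ε t hε0 ht0)
        (hint t (t * q) ht0 (by positivity))]
      linarith
  have hfin := (key n le_rfl).2
  rw [hqn] at hfin
  have hu : (fun x => Ψ (x / 1) * (τ ε x * f ε x)) = fun x => τ ε x * f ε x := by
    funext x
    by_cases hx : x ∈ tsupport (τ ε)
    · rw [div_one, hΨ1 x (abs_le.2 (hτs hx)), one_mul]
    · rw [image_eq_zero_of_notMem_tsupport hx]; simp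
  rw [hu] at hfin
  exact hfin
end

section
/- For every seminorm N on V there exists a unique seminorm N^G on V satisfying: (1) N^G is G-invariant; (2) N^G ≤ N; (3) N^G is maximal, i.e. every G-invariant seminorm M with M ≤ N satisfies M ≤ N^G. Moreover N^G is the greatest lower bound of the family of seminorms (g·N)_{g∈G}. -/
/-!
Any pointwise bounded nonempty family of seminorms has a pointwise supremum that is again a
seminorm. Applied to the seminorms `M` lying below every translate `g·N`, this gives the greatest
lower bound `N^G` of the translates. The family of these `M` is stable under translation by `G`,
because `G` permutes the translates of `N`; hence so is its supremum, i.e. `N^G` is `G`-invariant.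
Conversely a `G`-invariant `M ≤ N` satisfies `M = g·M ≤ g·N` for all `g`, so `M ≤ N^G`.
Uniqueness is antisymmetry of the order.
-/

/-- A seminorm on a complex vector space `V`. -/
def IsSeminormC {V : Type*} [AddCommGroup V] [Module ℂ V] (N : V → ℝ) : Prop :=
  (∀ v, 0 ≤ N v) ∧ (∀ v w, N (v + w) ≤ N v + N w) ∧
    (∀ (a : ℂ) (v : V), N (a • v) = ‖a‖ * N v)

/-- The greatest lower bound among seminorms of the family `(g·N)_{g ∈ G}`, defined as the pointwise
supremum of all seminorms below every `g·N`. When `N` is nonnegative, the family is nonempty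
(it contains `0`) and bounded at `v` by `N v`, so the real supremum is a genuine one. -/
noncomputable def seminormGInf {V : Type*} [AddCommGroup V] [Module ℂ V]
    (G : Type*) [Group G] [DistribMulAction G V] (N : V → ℝ) (v : V) : ℝ :=
  ⨆ M : {M : V → ℝ // IsSeminormC M ∧ ∀ (g : G) (w : V), M w ≤ N (g⁻¹ • w)}, M.1 v

section

variable {V : Type*} [AddCommGroup V] [Module ℂ V] {G : Type*} [Group G] [DistribMulAction G V]
  {N : V → ℝ}

theorem le_seminormGInf {M : V → ℝ} (hM : IsSeminormC M)
    (h : ∀ (g : G) (w : V), M w ≤ N (g⁻¹ • w)) (v : V) : M v ≤ seminormGInf G N v := by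
  refine le_ciSup (f := fun M : {M : V → ℝ // IsSeminormC M ∧
    ∀ (g : G) (w : V), M w ≤ N (g⁻¹ • w)} => M.1 v) ⟨N v, ?_⟩ ⟨M, hM, h⟩
  rintro _ ⟨M', rfl⟩
  simpa using M'.2.2 1 v

theorem seminormGInf_le (hN : IsSeminormC N) {v : V} {b : ℝ}
    (h : ∀ M : V → ℝ, IsSeminormC M → (∀ (g : G) (w : V), M w ≤ N (g⁻¹ • w)) → M v ≤ b) :
    seminormGInf G N v ≤ b := by
  have : Nonempty {M : V → ℝ // IsSeminormC M ∧ ∀ (g : G) (w : V), M w ≤ N (g⁻¹ • w)} :=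
    ⟨fun _ => 0, ⟨fun _ => le_rfl, fun _ _ => by simp, fun _ _ => by simp⟩, fun _ _ => hN.1 _⟩
  exact ciSup_le fun M => h M.1 M.2.1 M.2.2

theorem isSeminormC_seminormGInf (hN : IsSeminormC N) : IsSeminormC (seminormGInf G N) := by
  have hnonneg : ∀ v, 0 ≤ seminormGInf G N v :=
    le_seminormGInf (M := fun _ => 0)
      ⟨fun _ => le_rfl, fun _ _ => by simp, fun _ _ => by simp⟩ fun _ _ => hN.1 _
  refine ⟨hnonneg, fun v w => ?_, fun a v => ?_⟩
  · exact seminormGInf_le hN fun M hM h => (hM.2.1 v w).trans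
      (add_le_add (le_seminormGInf hM h v) (le_seminormGInf hM h w))
  · rw [seminormGInf, seminormGInf, Real.mul_iSup_of_nonneg (norm_nonneg a)]
    exact iSup_congr fun M => M.2.1.2.2 a v

/-- Translating a seminorm below every `g·N` gives another one, so the supremum can only
increase along the action. -/
theorem seminormGInf_le_smul [SMulCommClass G ℂ V] (hN : IsSeminormC N) (g : G) (v : V) :
    seminormGInf G N v ≤ seminormGInf G N (g • v) := by
  refine seminormGInf_le hN fun M hM h => ?_
  have key := le_seminormGInf (G := G) (N := N) (M := fun w => M (g⁻¹ • w))
    ⟨fun _ => hM.1 _, fun x y => by simpa only [smul_add] using hM.2.1 (g⁻¹ • x) (g⁻¹ • y),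
      fun a x => by simpa only [smul_comm g⁻¹ a x] using hM.2.2 a (g⁻¹ • x)⟩
    (fun k w => by simpa [smul_smul] using h (g⁻¹ * k) (g⁻¹ • w)) (g • v)
  simpa using key

end

/-- Claim 3.4 / A.2: for every seminorm `N` on `V` (with a group `G` acting on
`V` by `ℂ`-linear automorphisms) there is a unique seminorm `N^G` which is
`G`-invariant, bounded by `N`, and maximal with these properties; moreover
`N^G` is the greatest lower bound, among seminorms, of the family
`(g·N)_{g∈G}`, where `(g·N)(v) = N(g⁻¹·v)`. -/
theorem stmt9 {V : Type*} [AddCommGroup V] [Module ℂ V]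
    {G : Type*} [Group G] [DistribMulAction G V] [SMulCommClass G ℂ V]
    (N : V → ℝ) (hN : IsSeminormC N) :
    ∃ NG : V → ℝ,
      (IsSeminormC NG ∧
        (∀ (g : G) (v : V), NG (g • v) = NG v) ∧
        (∀ v, NG v ≤ N v) ∧
        (∀ M : V → ℝ, IsSeminormC M → (∀ (g : G) (v : V), M (g • v) = M v) →
          (∀ v, M v ≤ N v) → ∀ v, M v ≤ NG v)) ∧
      (∀ NG' : V → ℝ,
        (IsSeminormC NG' ∧
          (∀ (g : G) (v : V), NG' (g • v) = NG' v) ∧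
          (∀ v, NG' v ≤ N v) ∧
          (∀ M : V → ℝ, IsSeminormC M → (∀ (g : G) (v : V), M (g • v) = M v) →
            (∀ v, M v ≤ N v) → ∀ v, M v ≤ NG' v)) →
        NG' = NG) ∧
      ((∀ (g : G) (v : V), NG v ≤ N (g⁻¹ • v)) ∧
        (∀ M : V → ℝ, IsSeminormC M → (∀ (g : G) (v : V), M v ≤ N (g⁻¹ • v)) →
          ∀ v, M v ≤ NG v)) := by
  have hS := isSeminormC_seminormGInf (G := G) hN
  have hinv : ∀ (g : G) (v : V), seminormGInf G N (g • v) = seminormGInf G N v := fun g v =>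
    le_antisymm (by simpa using seminormGInf_le_smul hN g⁻¹ (g • v)) (seminormGInf_le_smul hN g v)
  have hle : ∀ (g : G) (v : V), seminormGInf G N v ≤ N (g⁻¹ • v) := fun g v =>
    seminormGInf_le hN fun _ _ h => h g v
  have hle' : ∀ v, seminormGInf G N v ≤ N v := fun v => by simpa using hle 1 v
  have hmax : ∀ M : V → ℝ, IsSeminormC M → (∀ (g : G) (v : V), M (g • v) = M v) →
      (∀ v, M v ≤ N v) → ∀ v, M v ≤ seminormGInf G N v := fun M hM hi h =>
    le_seminormGInf hM fun g w => (hi g⁻¹ w).symm.trans_le (h _)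
  refine ⟨seminormGInf G N, ⟨hS, hinv, hle', hmax⟩, ?_, hle, fun M hM h => le_seminormGInf hM h⟩
  rintro NG' ⟨hS', hinv', hle'', hmax'⟩
  exact funext fun v => le_antisymm (hmax NG' hS' hinv' hle'' v) (hmax' _ hS hinv hle' v)
end

section
/- For every pair (z, w) ∈ ℍ × ℍ, the quadratic form R_{z,w} has determinant 1 and the real part of its restriction to ℝ² is positive definite; conversely, every quadratic form on ℂ² of determinant 1 whose restriction to ℝ² has positive definite real part equals R_{z,w} for a unique pair (z, w) ∈ ℍ × ℍ. -/
/-!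
With `u = conj w`, `d = z - u`, `a = x - z y` and `b = x - u y` (`x, y` real), the relation
`b - a = d y` gives `Re (2 i a b conj d) = 2 (Im z |b|² + Im w |a|²)`, whence the positivity of
`Re R_{z,w}`.

Conversely, a form `A x² + 2 B x y + C y²` of determinant `1` with `A ≠ 0` has the roots
`(-B ± i) / A`, and comparing `x²`- and `xy`-coefficients shows that it equals `R_{z,w}` exactly when
`z = (-B + i) / A` and `conj w = (-B - i) / A`. It remains to see that these roots lie
in the upper and the lower half-plane respectively, i.e. that `|Im (B conj A)| < Re A`. Writing
`r = Re A Re C - (Re B)² > 0`, the determinant condition gives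
`(Im (B conj A))² = (Re A)² - r |A|²`.
-/

open Complex

/-- The quadratic form `R_{z,w}(x,y) = 2i·(x − z·y)·(x − conj(w)·y)/(z − conj(w))`
on `ℂ²`, for `z, w` in the upper half-plane; for `z = w = i` it is `x² + y²`. -/
noncomputable def Rzw (z w : ℂ) (x y : ℂ) : ℂ :=
  2 * Complex.I * (x - z * y) * (x - (starRingEnd ℂ) w * y) / (z - (starRingEnd ℂ) w)

lemma sub_conj_ne_zero {z w : ℂ} (hz : 0 < z.im) (hw : 0 < w.im) :
    z - (starRingEnd ℂ) w ≠ 0 := by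
  intro h
  have := congrArg Complex.im h
  simp at this
  linarith

lemma Rzw_det {z w : ℂ} (hz : 0 < z.im) (hw : 0 < w.im) :
    Rzw z w 1 0 * Rzw z w 0 1 -
      ((Rzw z w 1 1 - Rzw z w 1 0 - Rzw z w 0 1) / 2) ^ 2 = 1 := by
  have hd := sub_conj_ne_zero hz hw
  unfold Rzw
  generalize (starRingEnd ℂ) w = u at *
  field_simp
  ring_nf
  simp only [I_sq]
  ring

/-- The real part of `R_{z,w}` at a real point, in a form where its sign is visible. -/
lemma Rzw_re (z w : ℂ) (x y : ℝ) :
    (Rzw z w x y).re = 2 * (z.im * normSq (x - (starRingEnd ℂ) w * y) +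
      w.im * normSq (x - z * y)) / normSq (z - (starRingEnd ℂ) w) := by
  unfold Rzw
  rw [div_re, ← add_div]
  congr 1
  simp [normSq_apply]
  ring

lemma Rzw_re_pos {z w : ℂ} (hz : 0 < z.im) (hw : 0 < w.im) {x y : ℝ}
    (h : (x, y) ≠ (0, 0)) : 0 < (Rzw z w x y).re := by
  rw [Rzw_re]
  have ha : (x : ℂ) - z * y ≠ 0 := by
    intro h0
    have him := congrArg Complex.im h0
    have hre := congrArg Complex.re h0
    simp at him hre
    rcases him with him | rfl
    · exact hz.ne' him
    · simp at hre
      simp [hre] at h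
  have h1 := normSq_pos.2 ha
  have h2 := normSq_pos.2 (sub_conj_ne_zero hz hw)
  have h3 := normSq_nonneg ((x : ℂ) - (starRingEnd ℂ) w * y)
  positivity

/-- A form of determinant `1` equals `R_{z,w}` iff `z` and `conj w` are its two roots, in
the order fixed by the sign of `± i`. -/
lemma eq_Rzw_iff {A B C z w : ℂ} (hA : A ≠ 0) (hdet : A * C - B ^ 2 = 1)
    (hd : z - (starRingEnd ℂ) w ≠ 0) :
    (∀ x y : ℂ, A * x ^ 2 + 2 * B * x * y + C * y ^ 2 = Rzw z w x y) ↔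
      z = (-B + I) / A ∧ (starRingEnd ℂ) w = (-B - I) / A := by
  unfold Rzw
  generalize (starRingEnd ℂ) w = u at *
  constructor
  · intro h
    have h10 := h 1 0
    have h01 := h 0 1
    have h11 := h 1 1
    rw [eq_div_iff hd] at h10 h01 h11
    have e1 : A * (z - u) = 2 * I := by linear_combination h10
    have e2 : A * (z + u) = -2 * B := by
      have e3 : B * (z - u) = -I * (z + u) := by
        linear_combination (h11 - h10 - h01) / 2
      apply mul_right_cancel₀ hd
      linear_combination (z + u) * e1 + 2 * e3
    constructor
    · rw [eq_div_iff hA]; linear_combination (e1 + e2) / 2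
    · rw [eq_div_iff hA]; linear_combination (e2 - e1) / 2
  · rintro ⟨hz, hu⟩ x y
    rw [eq_div_iff hA] at hz hu
    rw [eq_div_iff hd]
    apply mul_left_cancel₀ hA
    have e1 : A * (z - u) = 2 * I := by linear_combination hz - hu
    have e2 : A * (z + u) = -2 * B := by linear_combination hz + hu
    have e3 : A * (z * u) = C := by
      apply mul_left_cancel₀ hA
      linear_combination (A * u) * hz + (-B + I) * hu - hdet - I_sq
    linear_combination (A * x ^ 2 + 2 * B * x * y + C * y ^ 2) * e1 +
      2 * I * x * y * e2 - 2 * I * y ^ 2 * e3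

/-- The key estimate: it places the roots `(-B ± i) / A` on opposite sides of the real line. -/
lemma abs_im_mul_conj_lt {A B C : ℂ} (hdet : A * C - B ^ 2 = 1) (hA : 0 < A.re)
    (hr : 0 < A.re * C.re - B.re ^ 2) : |A.im * B.re - A.re * B.im| < A.re := by
  have h1 := congrArg Complex.re hdet
  have h2 := congrArg Complex.im hdet
  simp [sq] at h1 h2
  apply abs_lt_of_sq_lt_sq _ hA.le
  have key : (A.im * B.re - A.re * B.im) ^ 2 =
      A.re ^ 2 - (A.re * C.re - B.re ^ 2) * (A.re ^ 2 + A.im ^ 2) := by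
    linear_combination A.re ^ 2 * h1 + A.re * A.im * h2
  have : 0 < (A.re * C.re - B.re ^ 2) * (A.re ^ 2 + A.im ^ 2) := by positivity
  linarith

/-- Lemma C (1): for every `(z,w) ∈ ℍ × ℍ` the form `R_{z,w}` has determinant
`1` and positive definite real part on `ℝ²`; conversely every quadratic form
on `ℂ²` of determinant `1` whose restriction to `ℝ²` has positive definite
real part equals `R_{z,w}` for a unique pair `(z,w) ∈ ℍ × ℍ`.  (A quadratic
form is written `A x² + 2B xy + C y²`; its determinant is `AC − B²`.) -/
theorem stmt14 :
    (∀ z w : ℂ, 0 < z.im → 0 < w.im →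
      (Rzw z w 1 0 * Rzw z w 0 1 -
        ((Rzw z w 1 1 - Rzw z w 1 0 - Rzw z w 0 1) / 2) ^ 2 = 1) ∧
      (∀ x y : ℝ, (x, y) ≠ (0, 0) → 0 < (Rzw z w (x : ℂ) (y : ℂ)).re)) ∧
    (∀ A B C : ℂ, A * C - B ^ 2 = 1 →
      (∀ x y : ℝ, (x, y) ≠ (0, 0) →
        0 < (A * (x : ℂ) ^ 2 + 2 * B * (x : ℂ) * (y : ℂ) + C * (y : ℂ) ^ 2).re) →
      ∃! p : ℂ × ℂ, (0 < p.1.im ∧ 0 < p.2.im) ∧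
        ∀ x y : ℂ, A * x ^ 2 + 2 * B * x * y + C * y ^ 2 = Rzw p.1 p.2 x y) := by
  refine ⟨fun z w hz hw => ⟨Rzw_det hz hw, fun x y h => Rzw_re_pos hz hw h⟩, ?_⟩
  intro A B C hdet hpos
  have hA : 0 < A.re := by simpa using hpos 1 0 (by simp)
  have hA0 : A ≠ 0 := by rintro rfl; simp at hA
  have hr : 0 < A.re * C.re - B.re ^ 2 := by
    -- the minimum of the real part on the line `y = Re A` is attained at `x = -Re B`
    have h := hpos (-B.re) A.re (by simp [hA.ne'])
    simp [sq] at h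
    refine pos_of_mul_pos_right (a := A.re) ?_ hA.le
    linarith
  obtain ⟨hl, hu⟩ := abs_lt.1 (abs_im_mul_conj_lt hdet hA hr)
  have hN := normSq_pos.2 hA0
  have hz : 0 < ((-B + I) / A).im := by
    rw [div_im, ← sub_div]
    apply div_pos _ hN
    simp
    linarith
  have hw : 0 < ((starRingEnd ℂ) ((-B - I) / A)).im := by
    rw [conj_im, div_im, ← sub_div, ← neg_div]
    apply div_pos _ hN
    simp
    linarith
  refine ⟨((-B + I) / A, (starRingEnd ℂ) ((-B - I) / A)), ⟨⟨hz, hw⟩, ?_⟩, ?_⟩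
  · exact (eq_Rzw_iff hA0 hdet (sub_conj_ne_zero hz hw)).2 ⟨rfl, conj_conj _⟩
  · rintro ⟨z, w⟩ ⟨⟨hz', hw'⟩, h⟩
    obtain ⟨h1, h2⟩ := (eq_Rzw_iff hA0 hdet (sub_conj_ne_zero hz' hw')).1 h
    exact Prod.ext h1 (by rw [← h2, conj_conj])
end

section
/- U = SL(2,ℝ)·I·SO(2,ℂ); that is, every g ∈ U can be written as g = g₁·h·k with g₁ ∈ SL(2,ℝ), h ∈ I and k ∈ SO(2,ℂ), and conversely every such product belongs to U. -/
/-! Write `g(Q)` as the symmetric matrix `S = g gᵀ = A + iB` with `A`, `B` real.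

If `g ∈ U`, then `A` is positive definite, so `A` and `B` are simultaneously diagonalised by some
`R ∈ SL(2,ℝ)` (`exists_diagonalizer`): the condition that `Au` and `Bu` be parallel is a binary
quadratic equation in `u` whose discriminant is a nonnegative multiple of a value of `A`; a nonzero
root `u` is one row of `R`, and the other row is the suitably scaled vector orthogonal to `Au`, which
is then also orthogonal to `Bu`. Thus `(R g)(R g)ᵀ = diag(w₁, w₂)` with `w₁ w₂ = 1` and `Re w₂ > 0`.
Choosing `z` to be the principal square root of `w₂` gives `|arg z| < π/4`, and
`k = diag(z, z⁻¹) R g` satisfies `k kᵀ = 1`, so `g = R⁻¹ · diag(z⁻¹, z) · k`.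

Conversely, for `g = g₁ h k` and a real vector `v ≠ 0`, put `(x, y) = v g₁ ≠ 0`; then
`g(Q)(v) = x² z⁻² + y² z²`, and `|arg z| < π/4` makes both `z²` and `z⁻²` have positive real part.
-/

open Complex

abbrev SL2R := Matrix.SpecialLinearGroup (Fin 2) ℝ
abbrev SL2C := Matrix.SpecialLinearGroup (Fin 2) ℂ

/-- The embedding `SL(2,ℝ) → SL(2,ℂ)`. -/
noncomputable def toSL2C : SL2R →* SL2C :=
  Matrix.SpecialLinearGroup.map (algebraMap ℝ ℂ)

/-- `g(Q)(x,y) = Q((x,y)·g)` where `Q(x,y) = x² + y²` and `(x,y)` is a row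
vector. -/
def gQ (g : SL2C) (x y : ℂ) : ℂ :=
  (x * g 0 0 + y * g 1 0) ^ 2 + (x * g 0 1 + y * g 1 1) ^ 2

/-- `U = {g ∈ SL(2,ℂ) : Re(g(Q)) is positive definite on ℝ²}`. -/
def USet : Set SL2C :=
  {g | ∀ x y : ℝ, (x, y) ≠ (0, 0) → 0 < (gQ g (x : ℂ) (y : ℂ)).re}

/-- `I = {diag(z⁻¹, z) : z ≠ 0, |arg z| < π/4}`. -/
def ISet : Set SL2C :=
  {h | ∃ z : ℂ, z ≠ 0 ∧ |Complex.arg z| < Real.pi / 4 ∧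
    (h : Matrix (Fin 2) (Fin 2) ℂ) = !![z⁻¹, 0; 0, z]}

/-- `SO(2,ℂ) = {k ∈ SL(2,ℂ) : k(Q) = Q}`. -/
def SO2C : Set SL2C := {k | ∀ x y : ℂ, gQ k x y = x ^ 2 + y ^ 2}

theorem gQ_mul (g h : SL2C) (x y : ℂ) :
    gQ (g * h) x y = gQ h (x * g 0 0 + y * g 1 0) (x * g 0 1 + y * g 1 1) := by
  simp only [gQ, Matrix.SpecialLinearGroup.coe_mul, Matrix.mul_apply, Fin.sum_univ_two]
  ring

theorem toSL2C_apply (g : SL2R) (i j : Fin 2) : toSL2C g i j = ((g i j : ℝ) : ℂ) := rfl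

theorem re_sq_pos_of_abs_arg_lt {z : ℂ} (hz : z ≠ 0) (h : |arg z| < Real.pi / 4) :
    0 < (z ^ 2).re := by
  have hn : 0 < ‖z‖ := norm_pos_iff.mpr hz
  have hc : 0 < Real.cos (2 * arg z) := by
    apply Real.cos_pos_of_mem_Ioo
    have := abs_lt.mp h
    constructor <;> linarith [this.1, this.2]
  have e : (z ^ 2).re = ‖z‖ ^ 2 * Real.cos (2 * arg z) := by
    rw [Real.cos_two_mul', pow_two z, Complex.mul_re]
    simp only [← Complex.norm_mul_cos_arg z, ← Complex.norm_mul_sin_arg z]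
    ring
  rw [e]
  positivity

/-- The principal square root maps the right half plane into the sector `|arg z| < π/4`. -/
theorem exists_sqrt {w : ℂ} (hw : 0 < w.re) :
    ∃ z : ℂ, z ≠ 0 ∧ |arg z| < Real.pi / 4 ∧ z ^ 2 = w := by
  have hw0 : w ≠ 0 := by rintro rfl; simp at hw
  have ha : |arg w| < Real.pi / 2 := Complex.abs_arg_lt_pi_div_two_iff.mpr (Or.inl hw)
  have hb := abs_lt.mp ha
  have him : (log w / 2).im = arg w / 2 := by
    simp [← Complex.log_im]
  refine ⟨exp (log w / 2), exp_ne_zero _, ?_, ?_⟩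
  · rw [← Complex.log_im, Complex.log_exp, him, abs_div, abs_two]
    · linarith
    · rw [him]; linarith [hb.1, Real.pi_pos]
    · rw [him]; linarith [hb.2, Real.pi_pos]
  · rw [← Complex.exp_nat_mul]
    push_cast
    rw [mul_div_cancel₀ _ two_ne_zero, Complex.exp_log hw0]

theorem exists_isotropic {α β γ : ℝ} (h : 0 ≤ β ^ 2 - 4 * α * γ) :
    ∃ x y : ℝ, (x, y) ≠ (0, 0) ∧ α * x ^ 2 + β * x * y + γ * y ^ 2 = 0 := by
  by_cases hα : α = 0
  · exact ⟨1, 0, by simp, by simp [hα]⟩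
  · refine ⟨-β + √(β ^ 2 - 4 * α * γ), 2 * α, by simp [hα], ?_⟩
    have := Real.sq_sqrt h
    linear_combination α * this

/-- Simultaneous diagonalisation of two real binary quadratic forms `(a, b, c)` and `(p, q, r)`, the
first positive definite, in an oriented unimodular basis with rows `(x, y)` and `(s, t)`. -/
theorem exists_diagonalizer {a b c : ℝ} (p q r : ℝ)
    (hA : ∀ x y : ℝ, (x, y) ≠ (0, 0) → 0 < a * x ^ 2 + 2 * b * x * y + c * y ^ 2) :
    ∃ x y s t : ℝ, x * t - y * s = 1 ∧
      a * x * s + b * (x * t + y * s) + c * y * t = 0 ∧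
      p * x * s + q * (x * t + y * s) + r * y * t = 0 := by
  have ha : 0 < a := by simpa using hA 1 0 (by simp)
  have hnonneg : ∀ x y : ℝ, 0 ≤ a * x ^ 2 + 2 * b * x * y + c * y ^ 2 := by
    intro x y
    by_cases h : (x, y) = (0, 0)
    · obtain ⟨rfl, rfl⟩ := Prod.mk.inj h
      simp
    · exact (hA x y h).le
  have hdisc : 0 ≤ (a * r - c * p) ^ 2 - 4 * (a * q - b * p) * (b * r - c * q) := by
    -- `a` times the discriminant is the value of the form `(a, b, c)` at this vector
    have h := hnonneg (a * r - c * p) (-2 * (a * q - b * p))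
    refine (mul_nonneg_iff_of_pos_left ha).mp ?_
    linarith
  obtain ⟨x, y, hxy, h0⟩ := exists_isotropic hdisc
  have hpos := hA x y hxy
  set N := a * x ^ 2 + 2 * b * x * y + c * y ^ 2 with hN
  have hN0 : N ≠ 0 := hpos.ne'
  refine ⟨x, y, -(b * x + c * y) / N, (a * x + b * y) / N, ?_, ?_, ?_⟩
  · field_simp
    rw [hN]; ring
  · field_simp
    ring
  · field_simp
    linear_combination h0

/-- Lemma C (2): `U = SL(2,ℝ)·I·SO(2,ℂ)`. -/
theorem stmt15 : ∀ g : SL2C,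
    g ∈ USet ↔ ∃ (g₁ : SL2R) (h k : SL2C),
      h ∈ ISet ∧ k ∈ SO2C ∧ g = toSL2C g₁ * h * k := by
  intro g
  constructor
  · intro hg
    have hA : ∀ x y : ℝ, (x, y) ≠ (0, 0) →
        0 < (g 0 0 ^ 2 + g 0 1 ^ 2).re * x ^ 2 + 2 * (g 0 0 * g 1 0 + g 0 1 * g 1 1).re * x * y
          + (g 1 0 ^ 2 + g 1 1 ^ 2).re * y ^ 2 := by
      intro x y hxy
      have h := hg x y hxy
      have e : gQ g x y = (g 0 0 ^ 2 + g 0 1 ^ 2) * ((x ^ 2 : ℝ) : ℂ)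
          + (g 0 0 * g 1 0 + g 0 1 * g 1 1) * ((2 * x * y : ℝ) : ℂ)
          + (g 1 0 ^ 2 + g 1 1 ^ 2) * ((y ^ 2 : ℝ) : ℂ) := by
        simp only [gQ]; push_cast; ring
      rw [e, add_re, add_re, re_mul_ofReal, re_mul_ofReal, re_mul_ofReal] at h
      linarith
    obtain ⟨x, y, s, t, hdet, hre, him⟩ := exists_diagonalizer (g 0 0 ^ 2 + g 0 1 ^ 2).im
      (g 0 0 * g 1 0 + g 0 1 * g 1 1).im (g 1 0 ^ 2 + g 1 1 ^ 2).im hA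
    let R : SL2R := ⟨!![x, y; s, t], by rw [Matrix.det_fin_two_of]; exact hdet⟩
    set M : SL2C := toSL2C R * g with hM
    have m0 : ∀ j, M 0 j = x * g 0 j + y * g 1 j := by
      intro j
      rw [hM, Matrix.SpecialLinearGroup.coe_mul, Matrix.mul_apply, Fin.sum_univ_two,
        toSL2C_apply, toSL2C_apply]
      simp [R]
    have m1 : ∀ j, M 1 j = s * g 0 j + t * g 1 j := by
      intro j
      rw [hM, Matrix.SpecialLinearGroup.coe_mul, Matrix.mul_apply, Fin.sum_univ_two,
        toSL2C_apply, toSL2C_apply]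
      simp [R]
    have horth : M 0 0 * M 1 0 + M 0 1 * M 1 1 = 0 := by
      have e : M 0 0 * M 1 0 + M 0 1 * M 1 1 = (g 0 0 ^ 2 + g 0 1 ^ 2) * ((x * s : ℝ) : ℂ)
          + (g 0 0 * g 1 0 + g 0 1 * g 1 1) * ((x * t + y * s : ℝ) : ℂ)
          + (g 1 0 ^ 2 + g 1 1 ^ 2) * ((y * t : ℝ) : ℂ) := by
        rw [m0, m0, m1, m1]; push_cast; ring
      rw [e]
      apply Complex.ext
      · rw [add_re, add_re, re_mul_ofReal, re_mul_ofReal, re_mul_ofReal, zero_re]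
        linarith
      · rw [add_im, add_im, im_mul_ofReal, im_mul_ofReal, im_mul_ofReal, zero_im]
        linarith
    have hMdet : M 0 0 * M 1 1 - M 0 1 * M 1 0 = 1 := by
      rw [← Matrix.det_fin_two]; exact M.det_coe
    have hst : (s, t) ≠ (0, 0) := by
      intro h
      obtain ⟨rfl, rfl⟩ := Prod.mk.inj h
      simp at hdet
    have hw : 0 < (M 1 0 ^ 2 + M 1 1 ^ 2).re := by
      rw [m1, m1]; exact hg s t hst
    obtain ⟨z, hz, hzarg, hz2⟩ := exists_sqrt hw
    have hww : (M 0 0 ^ 2 + M 0 1 ^ 2) * z ^ 2 = 1 := by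
      rw [hz2]
      -- Lagrange's identity
      linear_combination (M 0 0 * M 1 0 + M 0 1 * M 1 1) * horth
        + (M 0 0 * M 1 1 - M 0 1 * M 1 0 + 1) * hMdet
    let h : SL2C := ⟨!![z⁻¹, 0; 0, z], by rw [Matrix.det_fin_two_of]; field_simp; simp⟩
    let h' : SL2C := ⟨!![z, 0; 0, z⁻¹], by rw [Matrix.det_fin_two_of]; field_simp; simp⟩
    have hh' : h * h' = 1 := by
      ext i j
      rw [Matrix.SpecialLinearGroup.coe_mul, Matrix.SpecialLinearGroup.coe_one]
      fin_cases i <;> fin_cases j <;> simp [h, h', hz]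
    refine ⟨R⁻¹, h, h' * M, ⟨z, hz, hzarg, rfl⟩, ?_, ?_⟩
    · intro X Y
      rw [gQ_mul]
      have e : gQ M (X * h' 0 0 + Y * h' 1 0) (X * h' 0 1 + Y * h' 1 1)
          = gQ M (X * z) (Y * z⁻¹) := by simp [h']
      rw [e]
      have hzz : z * z⁻¹ = 1 := mul_inv_cancel₀ hz
      simp only [gQ]
      linear_combination X ^ 2 * hww + 2 * X * Y * z * z⁻¹ * horth - Y ^ 2 * z⁻¹ ^ 2 * hz2
        + Y ^ 2 * (z * z⁻¹ + 1) * hzz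
    · rw [map_inv, hM, mul_assoc, ← mul_assoc h h', hh', one_mul, inv_mul_cancel_left]
  · rintro ⟨g₁, h, k, ⟨z, hz, hzarg, hh⟩, hk, rfl⟩ x y hxy
    have hp := re_sq_pos_of_abs_arg_lt hz hzarg
    have hp' : 0 < ((z⁻¹) ^ 2).re := by
      rw [inv_pow, Complex.inv_re]
      exact div_pos hp (Complex.normSq_pos.mpr (pow_ne_zero 2 hz))
    set X : ℝ := x * g₁ 0 0 + y * g₁ 1 0 with hX
    set Y : ℝ := x * g₁ 0 1 + y * g₁ 1 1 with hY
    have hdet : g₁ 0 0 * g₁ 1 1 - g₁ 0 1 * g₁ 1 0 = 1 := by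
      rw [← Matrix.det_fin_two]; exact g₁.det_coe
    have e : gQ (toSL2C g₁ * h * k) x y
        = z⁻¹ ^ 2 * ((X ^ 2 : ℝ) : ℂ) + z ^ 2 * ((Y ^ 2 : ℝ) : ℂ) := by
      rw [mul_assoc, gQ_mul, gQ_mul, hk, hh]
      simp only [toSL2C_apply, hX, hY]
      simp
      ring
    rw [e, add_re, re_mul_ofReal, re_mul_ofReal]
    by_cases hX0 : X = 0
    · have hY0 : Y ≠ 0 := by
        intro hY0
        -- `(x, y)` is recovered from `(X, Y)` by the adjugate of `g₁`
        have hx : x = 0 := by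
          linear_combination g₁ 1 1 * (hX.symm.trans hX0) - g₁ 1 0 * (hY.symm.trans hY0) - x * hdet
        have hy : y = 0 := by
          linear_combination g₁ 0 0 * (hY.symm.trans hY0) - g₁ 0 1 * (hX.symm.trans hX0) - y * hdet
        exact hxy (by rw [hx, hy])
      have : 0 < Y ^ 2 := by positivity
      rw [hX0]
      have := mul_pos hp this
      linarith
    · have h1 : 0 < X ^ 2 := by positivity
      have := mul_pos hp' h1
      have := mul_nonneg hp.le (sq_nonneg Y)
      linarith
end
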